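/- arXiv:2301.13369 — 2 statements merged into one kernel-verified Lean document; each statement's English description precedes it below -/
import Mathlib

section
/- Let γ solve the nonlocal two-phase Stefan problem with kernels k, η satisfying (K). For any 1 < p < ∞, the L^p norm of the positive part satisfies d/dt ‖γ⁺(t,·)‖_{L^p(ℝ^n)}^p ≤ 0; consequently ‖γ⁺(t,·)‖_{L^p} ≤ ‖γ⁺(0,·)‖_{L^p} for all t > 0. -/
open MeasureTheory Filter

/-- A classical bounded solution of the nonlocal two-phase Stefan problem. -/
def IsTwoPhaseStefanSol {n : ℕ} (a b ℓ₀ : ℝ)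
    (k η : EuclideanSpace ℝ (Fin n) → ℝ)
    (γ : ℝ → EuclideanSpace ℝ (Fin n) → ℝ) : Prop :=
  (∀ x, ContinuousOn (fun t => γ t x) (Set.Ici 0)) ∧
  (∀ t, Measurable (γ t)) ∧
  (∀ t ≥ 0, ∃ C : ℝ, ∀ x, |γ t x| ≤ C) ∧
  (∀ t > 0, ∀ x, HasDerivAt (fun s => γ s x)
      (a * ((∫ y, k (x - y) * max (γ t y) 0) - max (γ t x) 0)
        + b * ((∫ y, η (x - y) * min (γ t y + ℓ₀) 0) - min (γ t x + ℓ₀) 0)) t)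

/-! Where `γ` is positive the second phase contributes nonpositively to `∂γ/∂t`, so `γ⁺` is a
subsolution of `∂u/∂t = a (k * u - u)`. The solution operator `exp (a (t - s) (k * · - 1))` of this
linear equation is a Poisson mixture of the powers of the Markov kernel `k * ·`, which leaves
Lebesgue measure invariant. Hence by Jensen's inequality it contracts every `L^p`, and comparison
gives `γ⁺(t) ≤ exp (a (t - s) (k * · - 1)) γ⁺(s)`.

The comparison rests on a self-improving bound: if `γ` exceeds the linear solution by at most `B`
on `[s, T]`, it exceeds it by at most `B (1 - exp (-a (T - s)))`. This requires some finite `B` to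
begin with, that is a bound on `γ` uniform in time as well as in space. It comes from the Baire
category theorem: `t ↦ sup_x |γ(t, x)|` is lower semicontinuous, hence bounded on a relatively open
part of the closed set of times where it is not locally bounded, and the growth bound coming from
the equation carries this to nearby times, a contradiction. -/

section LocalBoundedness

open Set Topology

theorem le_div_one_sub_of_forall_upperBound {ι : Type*} {f : ι → ℝ} {θ N : ℝ} (hθ : θ < 1)
    (hf : BddAbove (range f)) (h : ∀ B, (∀ i, f i ≤ B) → ∀ i, f i ≤ N + θ * B) (i : ι) :
    f i ≤ N / (1 - θ) := by
  have : Nonempty ι := ⟨i⟩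
  have hsup : ⨆ j, f j ≤ N + θ * ⨆ j, f j := ciSup_le (h _ (le_ciSup hf))
  refine (le_ciSup hf i).trans ((le_div_iff₀ (sub_pos.2 hθ)).2 ?_)
  linarith

theorem bddAbove_image_of_isBoundedUnder {X Y : Type*} [TopologicalSpace X]
    [SemilatticeSup Y] [Nonempty Y] {K : Set X} (hK : IsCompact K) {f : X → Y}
    (hf : ∀ x ∈ K, (𝓝 x).IsBoundedUnder (· ≤ ·) f) : BddAbove (f '' K) := by
  refine hK.induction_on (p := fun s => BddAbove (f '' s)) (by simp)
    (fun s t hst ht => ht.mono (image_mono hst))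
    (fun s t hs ht => by rw [image_union]; exact hs.union ht) fun x hx => ?_
  obtain ⟨b, hb⟩ := hf x hx
  exact ⟨_, mem_nhdsWithin_of_mem_nhds hb, b, forall_mem_image.2 fun y hy => hy⟩

theorem isClosed_setOf_not_isBoundedUnder_nhds {X Y : Type*} [TopologicalSpace X] [LE Y]
    (f : X → Y) : IsClosed {x | ¬ (𝓝 x).IsBoundedUnder (· ≤ ·) f} := by
  refine isOpen_compl_iff.1 (isOpen_iff_mem_nhds.2 fun x hx => ?_)
  obtain ⟨B, hB⟩ := not_not.1 hx
  filter_upwards [eventually_eventually_nhds.2 hB] with y hy using not_not.2 ⟨B, hy⟩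

theorem exists_ball_le_of_isClosed {X : Type*} [PseudoMetricSpace X] [CompleteSpace X] {m : X → ℝ}
    (hm : LowerSemicontinuous m) {A : Set X} (hA : IsClosed A) (hne : A.Nonempty) :
    ∃ x₀ ∈ A, ∃ N, ∃ δ > 0, ∀ x ∈ A, dist x x₀ < δ → m x ≤ N := by
  have := hA.completeSpace_coe
  have := hne.to_subtype
  obtain ⟨N, ⟨x₀, hx₀⟩, hint⟩ := nonempty_interior_of_iUnion_of_closed
    (f := fun N : ℕ => {x : A | m x ≤ N})
    (fun N => (hm.isClosed_preimage N).preimage continuous_subtype_val)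
    (iUnion_eq_univ_iff.2 fun x => exists_nat_ge (m x))
  obtain ⟨δ, hδ, hball⟩ := Metric.mem_nhds_iff.1 (mem_interior_iff_mem_nhds.1 hint)
  exact ⟨x₀, hx₀, N, δ, hδ, fun x hx hxδ =>
    hball (show (⟨x, hx⟩ : A) ∈ Metric.ball ⟨x₀, hx₀⟩ δ from hxδ)⟩

/-- Growth condition on a nonnegative function `m` of time, the integrated form of the differential
inequality `|m'| ≤ L * m`: any bound `B` of `m` strictly between two times controls the increment of
`m` between them. No regularity of `m` is assumed, so it does not by itself make `m` bounded on
compact intervals. -/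
def HasSelfBoundedGrowth (L : ℝ) (m : ℝ → ℝ) : Prop :=
  ∀ s t B, (∀ r ∈ uIoo s t, m r ≤ B) → m t ≤ m s + L * B * |t - s|

namespace HasSelfBoundedGrowth

variable {L : ℝ} {m : ℝ → ℝ}

theorem le_two_mul_of_bddAbove (hm : HasSelfBoundedGrowth L m) (hL : 0 ≤ L) (hm0 : ∀ t, 0 ≤ m t)
    {s t : ℝ} (hst : L * |t - s| ≤ 1 / 2) (hbdd : BddAbove (m '' uIoo s t)) :
    m t ≤ 2 * m s := by
  have growth : ∀ r B, 0 ≤ B → |r - s| ≤ |t - s| → L * B * |r - s| ≤ 1 / 2 * B := by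
    intro r B hB hr
    calc L * B * |r - s| = L * |r - s| * B := by ring
      _ ≤ L * |t - s| * B := by gcongr
      _ ≤ 1 / 2 * B := by gcongr
  have hmid : ∀ r : uIoo s t, m r ≤ m s / (1 - 1 / 2) := by
    refine le_div_one_sub_of_forall_upperBound (by norm_num) (by rwa [← image_eq_range]) ?_
    rintro B hB ⟨r, hr⟩
    have hsub : uIoo s r ⊆ uIoo s t := by
      intro q hq
      simp only [uIoo, mem_Ioo] at hr hq ⊢
      grind
    have hrs : |r - s| ≤ |t - s| := abs_sub_left_of_mem_uIcc (uIoo_subset_uIcc_self hr)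
    exact (hm s r B fun q hq => hB ⟨q, hsub hq⟩).trans
      (add_le_add_right (growth r B ((hm0 r).trans (hB ⟨r, hr⟩)) hrs) _)
  have hend := hm s t (2 * m s) fun r hr => (hmid ⟨r, hr⟩).trans_eq (by ring)
  have := growth t (2 * m s) (by linarith [hm0 s]) le_rfl
  linarith

theorem le_two_mul_of_isBoundedUnder (hm : HasSelfBoundedGrowth L m) (hL : 0 ≤ L)
    (hm0 : ∀ t, 0 ≤ m t) {c t : ℝ} (hct : L * |t - c| ≤ 1 / 2)
    (hloc : ∀ r ∈ insert t (uIoo c t), (𝓝 r).IsBoundedUnder (· ≤ ·) m) : m t ≤ 2 * m c := by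
  refine hm.le_two_mul_of_bddAbove hL hm0 hct ⟨2 * m t, forall_mem_image.2 fun r hr => ?_⟩
  have hsub : uIcc t r ⊆ insert t (uIoo c t) := by
    intro q hq
    simp only [uIoo, uIcc, mem_Ioo, mem_Icc, mem_insert_iff] at hr hq ⊢
    grind
  have hrt : |r - t| ≤ |t - c| := by
    rw [abs_sub_comm r]; exact abs_sub_right_of_mem_uIcc (uIoo_subset_uIcc_self hr)
  refine hm.le_two_mul_of_bddAbove hL hm0 ((mul_le_mul_of_nonneg_left hrt hL).trans hct) ?_
  exact (bddAbove_image_of_isBoundedUnder isCompact_uIcc fun q hq => hloc q (hsub hq)).mono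
    (image_mono uIoo_subset_uIcc_self)

theorem le_two_mul_of_nearest (hm : HasSelfBoundedGrowth L m) (hL : 0 ≤ L)
    (hm0 : ∀ t, 0 ≤ m t) {c t : ℝ} (hct : L * |t - c| ≤ 1 / 2)
    (hnear : ∀ r, ¬ (𝓝 r).IsBoundedUnder (· ≤ ·) m → r ∈ uIcc c t → |t - c| ≤ |t - r|) :
    m t ≤ 2 * m c := by
  rcases eq_or_ne t c with rfl | hne
  · linarith [hm0 t]
  · refine hm.le_two_mul_of_isBoundedUnder hL hm0 hct fun r hr => not_not.1 fun hr' => ?_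
    have hrc : r ∈ uIcc c t := insert_subset right_mem_uIcc uIoo_subset_uIcc_self hr
    have := hnear r hr' hrc
    simp only [uIoo, mem_Ioo, mem_insert_iff] at hr
    grind

theorem isBoundedUnder_nhds (hm : HasSelfBoundedGrowth L m) (hL : 0 ≤ L) (hm0 : ∀ t, 0 ≤ m t)
    (hlsc : LowerSemicontinuous m) (t : ℝ) : (𝓝 t).IsBoundedUnder (· ≤ ·) m := by
  by_contra ht
  set A : Set ℝ := {t | ¬ (𝓝 t).IsBoundedUnder (· ≤ ·) m}
  have hA : IsClosed A := isClosed_setOf_not_isBoundedUnder_nhds m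
  obtain ⟨t₀, ht₀, N, δ, hδ, hN⟩ := exists_ball_le_of_isClosed hlsc hA ⟨t, ht⟩
  have hclose : ∀ᶠ r in 𝓝 t₀, L * |r - t₀| < 1 / 2 := by
    have hcont : Continuous fun r => L * |r - t₀| := by fun_prop
    exact hcont.continuousAt.eventually_lt_const (by simp)
  refine ht₀ (isBoundedUnder_of_eventually_le (a := 2 * N) ?_)
  filter_upwards [Metric.ball_mem_nhds t₀ hδ, hclose] with r hrδ hrL
  -- `m` is locally bounded strictly between `r` and the point `c` of `A` nearest to it.
  obtain ⟨c, ⟨hcA, hc⟩, hmin⟩ := (isCompact_uIcc.inter_left hA).exists_isMinOn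
    ⟨t₀, ht₀, left_mem_uIcc⟩ (f := fun q => |r - q|) (by fun_prop)
  have hrc : |r - c| ≤ |r - t₀| := abs_sub_right_of_mem_uIcc hc
  have hct₀ : |c - t₀| ≤ |r - t₀| := abs_sub_left_of_mem_uIcc hc
  have hcN : m c ≤ N := hN c hcA (hct₀.trans_lt hrδ)
  have := hm.le_two_mul_of_nearest hL hm0 (by nlinarith) (c := c) (t := r)
    fun q hqA hq => hmin ⟨hqA, uIcc_subset_uIcc_right hc hq⟩
  linarith

end HasSelfBoundedGrowth

theorem abs_sub_le_of_hasDerivAt_bound {f f' : ℝ → ℝ} {s t C : ℝ}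
    (hf : ContinuousOn f (uIcc s t)) (hf' : ∀ r ∈ uIoo s t, HasDerivAt f (f' r) r)
    (hC : ∀ r ∈ uIoo s t, |f' r| ≤ C) : |f t - f s| ≤ C * |t - s| := by
  wlog hst : s ≤ t generalizing s t
  · rw [abs_sub_comm, abs_sub_comm t]
    exact this (uIcc_comm s t ▸ hf) (uIoo_comm s t ▸ hf') (uIoo_comm s t ▸ hC) (le_of_not_ge hst)
  rcases hst.eq_or_lt with rfl | hst
  · simp
  rw [uIcc_of_lt hst] at hf
  rw [uIoo_of_lt hst] at hf' hC
  obtain ⟨r, hr, hslope⟩ := exists_hasDerivAt_eq_slope f f' hst hf hf'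
  rw [← mul_inv_le_iff₀ (abs_pos.2 (sub_pos.2 hst).ne'), ← div_eq_mul_inv, ← abs_div, ← hslope]
  exact hC r hr

section BoundedFamily

variable {X : Type*} {f f' : ℝ → X → ℝ} {L : ℝ}

theorem hasSelfBoundedGrowth_iSup_abs (hL : 0 ≤ L)
    (hcont : ∀ x, ContinuousOn (f · x) (Ici 0)) (hbdd : ∀ t ≥ 0, ∃ C, ∀ x, |f t x| ≤ C)
    (hderiv : ∀ t > 0, ∀ x, HasDerivAt (f · x) (f' t x) t)
    (hf' : ∀ t > 0, ∀ C, (∀ x, |f t x| ≤ C) → ∀ x, |f' t x| ≤ L * C) :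
    HasSelfBoundedGrowth L fun t => ⨆ x, |f (max t 0) x| := by
  intro s t B hB
  have hm : ∀ r x, |f (max r 0) x| ≤ ⨆ x, |f (max r 0) x| := fun r =>
    le_ciSup <| (hbdd _ (le_max_right r 0)).imp fun C hC => forall_mem_range.2 hC
  rcases eq_or_ne s t with rfl | hst
  · simp
  have hB0 : 0 ≤ B := by
    obtain ⟨r, hr⟩ := nonempty_uIoo.2 hst
    exact (Real.iSup_nonneg fun x => abs_nonneg _).trans (hB r hr)
  refine Real.iSup_le (fun x => ?_)
    (add_nonneg (Real.iSup_nonneg fun x => abs_nonneg _) (by positivity))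
  have hpos : ∀ r ∈ uIoo (max s 0) (max t 0), 0 < r ∧ r ∈ uIoo s t := by
    intro r hr
    simp only [uIoo, mem_Ioo] at hr ⊢
    grind
  have hLip : |f (max t 0) x - f (max s 0) x| ≤ L * B * |max t 0 - max s 0| := by
    refine abs_sub_le_of_hasDerivAt_bound
      ((hcont x).mono fun r hr => (le_inf (le_max_right _ _) (le_max_right _ _)).trans hr.1)
      (fun r hr => hderiv r (hpos r hr).1 x) fun r hr => hf' r (hpos r hr).1 B (fun y => ?_) x
    have := (hm r y).trans (hB r (hpos r hr).2)
    rwa [max_eq_left (hpos r hr).1.le] at this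
  calc |f (max t 0) x| ≤ |f (max s 0) x| + |f (max t 0) x - f (max s 0) x| := by
        linarith [abs_sub_abs_le_abs_sub (f (max t 0) x) (f (max s 0) x)]
    _ ≤ (⨆ y, |f (max s 0) y|) + L * B * |t - s| :=
        add_le_add (hm s x) (hLip.trans
          (mul_le_mul_of_nonneg_left (abs_max_sub_max_le_abs t s 0) (by positivity)))

theorem exists_forall_abs_le_of_abs_deriv_le (hL : 0 ≤ L)
    (hcont : ∀ x, ContinuousOn (f · x) (Ici 0)) (hbdd : ∀ t ≥ 0, ∃ C, ∀ x, |f t x| ≤ C)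
    (hderiv : ∀ t > 0, ∀ x, HasDerivAt (f · x) (f' t x) t)
    (hf' : ∀ t > 0, ∀ C, (∀ x, |f t x| ≤ C) → ∀ x, |f' t x| ≤ L * C) (T : ℝ) :
    ∃ S, ∀ t ∈ Icc 0 T, ∀ x, |f t x| ≤ S := by
  have hm : ∀ t, BddAbove (range fun x => |f (max t 0) x|) := fun t =>
    (hbdd _ (le_max_right t 0)).imp fun C hC => forall_mem_range.2 hC
  have hlsc : LowerSemicontinuous fun t => ⨆ x, |f (max t 0) x| :=
    lowerSemicontinuous_ciSup hm fun x =>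
      ((hcont x).comp_continuous (by fun_prop) fun t => le_max_right t 0).abs.lowerSemicontinuous
  obtain ⟨S, hS⟩ := bddAbove_image_of_isBoundedUnder (isCompact_Icc (a := (0 : ℝ)) (b := T))
    fun t _ => (hasSelfBoundedGrowth_iSup_abs hL hcont hbdd hderiv hf').isBoundedUnder_nhds hL
      (fun t => Real.iSup_nonneg fun x => abs_nonneg _) hlsc t
  refine ⟨S, fun t ht x => ?_⟩
  have := (le_ciSup (hm t) x).trans (hS (mem_image_of_mem _ ht))
  rwa [max_eq_left ht.1] at this

end BoundedFamily

end LocalBoundedness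

section MarkovKernels

open Set ProbabilityTheory
open scoped NNReal

section PoissonMean

open scoped Nat

/-- The mean `E[c N]` of a sequence `c` at a Poisson variable `N` of rate `z`. It is written as a
power series, so that `z` ranges over all of `ℝ` and can be differentiated. -/
noncomputable def poissonMean (c : ℕ → ℝ) (z : ℝ) : ℝ :=
  Real.exp (-z) * ∑' j, z ^ j / j ! * c j

theorem poissonMean_zero (c : ℕ → ℝ) : poissonMean c 0 = c 0 := by
  rw [poissonMean, tsum_eq_single 0 fun j hj => by simp [hj]]
  simp

theorem integral_poissonMeasure_eq_poissonMean (c : ℕ → ℝ) (r : ℝ≥0) :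
    ∫ j, c j ∂poissonMeasure r = poissonMean c r := by
  rw [integral_poissonMeasure, poissonMean, ← tsum_mul_left]
  exact tsum_congr fun j => by rw [smul_eq_mul]; ring

theorem hasDerivAt_tsum_pow_div_factorial_mul {c : ℕ → ℝ} {C : ℝ} (hc : ∀ j, |c j| ≤ C) (z : ℝ) :
    HasDerivAt (fun z => ∑' j, z ^ j / j ! * c j) (∑' j, z ^ j / j ! * c (j + 1)) z := by
  set R := |z| + 1
  have hR : 0 < R := by positivity
  have shift (y : ℝ) (j : ℕ) : ((j + 1 : ℕ) : ℝ) * y ^ (j + 1 - 1) / (j + 1)! = y ^ j / j ! := by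
    rw [Nat.factorial_succ, Nat.add_sub_cancel]
    push_cast
    field_simp
  have hu : Summable fun j : ℕ => j * R ^ (j - 1) / j ! * C := by
    rw [← summable_nat_add_iff 1]
    simpa only [shift] using (Real.summable_pow_div_factorial R).mul_right C
  have hterm : ∀ j y, y ∈ Ioo (-R) R →
      HasDerivAt (fun y : ℝ => y ^ j / j ! * c j) (j * y ^ (j - 1) / j ! * c j) y :=
    fun j y _ => ((hasDerivAt_pow j y).div_const _).mul_const _
  have hbound : ∀ (j : ℕ) y, y ∈ Ioo (-R) R →
      ‖(j * y ^ (j - 1) / j ! * c j : ℝ)‖ ≤ j * R ^ (j - 1) / j ! * C := by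
    intro j y hy
    rw [Real.norm_eq_abs, abs_mul, abs_div, abs_mul, abs_pow, Nat.abs_cast, Nat.abs_cast]
    gcongr
    · exact abs_le.2 ⟨hy.1.le, hy.2.le⟩
    · exact hc j
  have hderiv := hasDerivAt_tsum_of_isPreconnected hu isOpen_Ioo isPreconnected_Ioo hterm hbound
    (y₀ := 0) ⟨neg_lt_zero.2 hR, hR⟩
    (summable_of_ne_finset_zero (s := {0}) fun j hj => by simp_all)
    (abs_lt.1 (lt_add_one |z|))
  refine hderiv.congr_deriv ?_
  rw [(hu.of_norm_bounded fun j => hbound j z (abs_lt.1 (lt_add_one |z|))).tsum_eq_zero_add]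
  simp only [shift]
  simp

theorem hasDerivAt_poissonMean {c : ℕ → ℝ} {C : ℝ} (hc : ∀ j, |c j| ≤ C) (z : ℝ) :
    HasDerivAt (poissonMean c) (poissonMean (fun j => c (j + 1)) z - poissonMean c z) z := by
  refine ((hasDerivAt_neg z).exp.mul (hasDerivAt_tsum_pow_div_factorial_mul hc z)).congr_deriv ?_
  simp only [poissonMean]
  ring

end PoissonMean

section Mixture

variable {ι α β γ : Type*} [Countable ι] [MeasurableSpace ι] [MeasurableSingletonClass ι]
  [MeasurableSpace α] [MeasurableSpace β] [MeasurableSpace γ]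

/-- The mixture of the kernels `κ i`: to move from `x`, pick `i` according to `π`, then move
according to `κ i x`. -/
noncomputable def kernelMixture (π : Measure ι) (κ : ι → Kernel α β) : Kernel α β where
  toFun x := Kernel.ofFunOfCountable (fun i => κ i x) ∘ₘ π
  measurable' := Measure.measurable_of_measurable_coe _ fun s hs => by
    simp only [Measure.bind_apply hs (Kernel.aemeasurable _), lintegral_countable']
    exact .tsum fun i => ((κ i).measurable_coe hs).mul_const _

theorem kernelMixture_apply (π : Measure ι) (κ : ι → Kernel α β) (x : α) :
    kernelMixture π κ x = Kernel.ofFunOfCountable (fun i => κ i x) ∘ₘ π := rfl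

theorem kernelMixture_apply' (π : Measure ι) (κ : ι → Kernel α β) (x : α) {s : Set β}
    (hs : MeasurableSet s) : kernelMixture π κ x s = ∑' i, κ i x s * π {i} := by
  rw [kernelMixture_apply, Measure.bind_apply hs (Kernel.aemeasurable _), lintegral_countable']
  rfl

instance isMarkovKernel_kernelMixture (π : Measure ι) [IsProbabilityMeasure π]
    (κ : ι → Kernel α β) [∀ i, IsMarkovKernel (κ i)] : IsMarkovKernel (kernelMixture π κ) := by
  refine ⟨fun x => ?_⟩
  have : IsMarkovKernel (Kernel.ofFunOfCountable fun i => κ i x) :=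
    ⟨fun i => inferInstanceAs (IsProbabilityMeasure (κ i x))⟩
  rw [kernelMixture_apply]
  infer_instance

theorem kernelMixture_const (π : Measure ι) [IsProbabilityMeasure π] (κ : Kernel α β) :
    kernelMixture π (fun _ => κ) = κ := by
  ext x s hs
  rw [kernelMixture_apply, Measure.bind_apply hs (Kernel.aemeasurable _)]
  simp [Kernel.ofFunOfCountable]

theorem kernelMixture_comp (π : Measure ι) (κ : ι → Kernel β γ) (η : Kernel α β) :
    kernelMixture π κ ∘ₖ η = kernelMixture π fun i => κ i ∘ₖ η := by
  ext x s hs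
  simp only [Kernel.comp_apply' _ _ _ hs, kernelMixture_apply' π _ _ hs]
  rw [lintegral_tsum fun i => (((κ i).measurable_coe hs).mul_const _).aemeasurable]
  exact tsum_congr fun i => lintegral_mul_const _ ((κ i).measurable_coe hs)

theorem invariant_kernelMixture (π : Measure ι) [IsProbabilityMeasure π] {κ : ι → Kernel α α}
    {ν : Measure α} (hκ : ∀ i, Kernel.Invariant (κ i) ν) :
    Kernel.Invariant (kernelMixture π κ) ν := by
  rw [Kernel.Invariant, Measure.comp_eq_comp_const_apply, kernelMixture_comp]
  simp only [Kernel.comp_const, (hκ _).def, kernelMixture_const, Kernel.const_apply]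

theorem integral_kernelMixture {π : Measure ι} {κ : ι → Kernel α β} {x : α} {g : β → ℝ}
    (hg : Integrable g (kernelMixture π κ x)) :
    ∫ y, g y ∂kernelMixture π κ x = ∫ i, ∫ y, g y ∂κ i x ∂π := by
  rw [kernelMixture_apply, Measure.comp_eq_comp_const_apply] at hg ⊢
  rw [Kernel.integral_comp hg, Kernel.const_apply]
  rfl

end Mixture

section Contraction

variable {E : Type*} [MeasurableSpace E] {κ : Kernel E E} {ν : Measure E}

theorem rpow_integral_le_integral_rpow {α : Type*} [MeasurableSpace α] {μ : Measure α}
    [IsProbabilityMeasure μ] {u : α → ℝ} {C p : ℝ} (hp : 1 ≤ p) (hu : Measurable u)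
    (hu0 : ∀ x, 0 ≤ u x) (huC : ∀ x, u x ≤ C) : (∫ x, u x ∂μ) ^ p ≤ ∫ x, u x ^ p ∂μ := by
  have hp0 : 0 ≤ p := zero_le_one.trans hp
  refine (convexOn_rpow hp).map_integral_le (Real.continuous_rpow_const hp0).continuousOn
    isClosed_Ici (ae_of_all _ hu0) (.of_bound hu.aestronglyMeasurable C (ae_of_all _ fun x => ?_))
    (.of_bound (hu.pow_const p).aestronglyMeasurable (C ^ p) (ae_of_all _ fun x => ?_))
  · rw [Real.norm_of_nonneg (hu0 x)]
    exact huC x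
  · rw [Function.comp_apply, Real.norm_of_nonneg (Real.rpow_nonneg (hu0 x) p)]
    exact Real.rpow_le_rpow (hu0 x) (huC x) hp0

theorem integral_rpow_le_of_le_integral_kernel [IsMarkovKernel κ]
    (hκ : Kernel.Invariant κ ν) {u v : E → ℝ} {C p : ℝ} (hp : 1 ≤ p) (hu : Measurable u)
    (hu0 : ∀ x, 0 ≤ u x) (huC : ∀ x, u x ≤ C) (hup : Integrable (fun x => u x ^ p) ν)
    (hv : Measurable v) (hv0 : ∀ x, 0 ≤ v x) (hvu : ∀ x, v x ≤ ∫ y, u y ∂κ x) :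
    Integrable (fun x => v x ^ p) ν ∧ ∫ x, v x ^ p ∂ν ≤ ∫ x, u x ^ p ∂ν := by
  have hbound : ∀ x, v x ^ p ≤ ∫ y, u y ^ p ∂κ x := fun x =>
    (Real.rpow_le_rpow (hv0 x) (hvu x) (zero_le_one.trans hp)).trans
      (rpow_integral_le_integral_rpow hp hu hu0 huC)
  have hup' : Integrable (fun x => u x ^ p) ((κ ∘ₖ Kernel.const Unit ν) ()) := by
    rwa [← Measure.comp_eq_comp_const_apply, hκ.def]
  have hint : Integrable (fun x => ∫ y, u y ^ p ∂κ x) ν := hup'.integral_comp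
  have hvp : Integrable (fun x => v x ^ p) ν :=
    hint.mono' (hv.pow_const p).aestronglyMeasurable (ae_of_all _ fun x => by
      rw [Real.norm_of_nonneg (Real.rpow_nonneg (hv0 x) p)]; exact hbound x)
  refine ⟨hvp, (integral_mono hvp hint hbound).trans_eq ?_⟩
  have := Kernel.integral_comp hup'
  rwa [← Measure.comp_eq_comp_const_apply, hκ.def, Kernel.const_apply, eq_comm] at this

end Contraction

section ScalarComparison

theorem hasDerivAt_mul_sub_const (a s r : ℝ) : HasDerivAt (fun r => a * (r - s)) a r := by
  simpa using ((hasDerivAt_id r).sub_const s).const_mul a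

theorem nonpos_of_hasDerivAt_nonpos_of_pos {φ : ℝ → ℝ} {s t : ℝ} (hst : s ≤ t)
    (hφ : ContinuousOn φ (Icc s t)) (hs : φ s ≤ 0)
    (hderiv : ∀ r ∈ Ioo s t, 0 < φ r → ∃ d ≤ 0, HasDerivAt φ d r) : φ t ≤ 0 := by
  by_contra! ht
  have hclosed : IsClosed (Icc s t ∩ φ ⁻¹' Iic 0) :=
    hφ.preimage_isClosed_of_isClosed isClosed_Icc isClosed_Iic
  obtain ⟨z, ⟨hz, hφz⟩, hlast⟩ := (isCompact_Icc.of_isClosed_subset hclosed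
    inter_subset_left).exists_isGreatest ⟨s, left_mem_Icc.2 hst, hs⟩
  have hpos : ∀ r ∈ Ioo z t, 0 < φ r := fun r hr => by
    by_contra! hr0
    exact hr.1.not_ge (hlast ⟨⟨hz.1.trans hr.1.le, hr.2.le⟩, hr0⟩)
  have hanti : AntitoneOn φ (Icc z t) := by
    refine antitoneOn_of_deriv_nonpos (convex_Icc z t) (hφ.mono (Icc_subset_Icc_left hz.1))
      (fun r hr => ?_) (fun r hr => ?_) <;> rw [interior_Icc] at hr <;>
      obtain ⟨d, hd, hφd⟩ := hderiv r ⟨hz.1.trans_lt hr.1, hr.2⟩ (hpos r hr)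
    · exact hφd.differentiableAt.differentiableWithinAt
    · rwa [hφd.deriv]
  exact ht.not_ge ((hanti (left_mem_Icc.2 hz.2) (right_mem_Icc.2 hz.2) hz.2).trans hφz)

theorem le_mul_one_sub_exp_of_hasDerivAt {f : ℝ → ℝ} {s t a M : ℝ} (hst : s ≤ t) (ha : 0 ≤ a)
    (hM : 0 ≤ M) (hf : ContinuousOn f (Icc s t)) (hs : f s ≤ 0)
    (hderiv : ∀ r ∈ Ioo s t, 0 < f r → ∃ d ≤ a * (M - f r), HasDerivAt f d r) :
    f t ≤ M * (1 - Real.exp (-(a * (t - s)))) := by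
  have key : Real.exp (a * (t - s)) * (f t - M) + M ≤ 0 := by
    refine nonpos_of_hasDerivAt_nonpos_of_pos (φ := fun r => Real.exp (a * (r - s)) * (f r - M) + M)
      hst (by fun_prop) (by simpa using hs) fun r hr hpos => ?_
    have hexp : 1 ≤ Real.exp (a * (r - s)) :=
      Real.one_le_exp (mul_nonneg ha (sub_nonneg.2 hr.1.le))
    have hfr : 0 < f r := by
      by_contra! hfr
      nlinarith
    obtain ⟨d, hd, hfd⟩ := hderiv r hr hfr
    refine ⟨_, ?_, ((hasDerivAt_mul_sub_const a s r).exp.mul (hfd.sub_const M)).add_const M⟩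
    nlinarith
  rw [Real.exp_neg]
  field_simp
  linarith

end ScalarComparison

section JumpSemigroup

variable {E : Type*} [MeasurableSpace E] {κ : Kernel E E}

theorem integrable_of_abs_le {μ : Measure E} [IsFiniteMeasure μ] {g : E → ℝ} {C : ℝ}
    (hg : Measurable g) (hgC : ∀ x, |g x| ≤ C) : Integrable g μ :=
  .of_bound hg.aestronglyMeasurable C (ae_of_all _ hgC)

theorem abs_integral_le_of_abs_le {μ : Measure E} [IsProbabilityMeasure μ] {g : E → ℝ} {C : ℝ}
    (hgC : ∀ x, |g x| ≤ C) : |∫ x, g x ∂μ| ≤ C := by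
  simpa using norm_integral_le_of_norm_le_const (μ := μ) (f := g) (ae_of_all _ hgC)

instance isMarkovKernel_pow [IsMarkovKernel κ] (j : ℕ) : IsMarkovKernel (κ ^ j) := by
  induction j with
  | zero => exact inferInstanceAs (IsMarkovKernel Kernel.id)
  | succ j ih =>
    rw [pow_succ]
    exact inferInstanceAs (IsMarkovKernel ((κ ^ j) ∘ₖ κ))

theorem invariant_pow {ν : Measure E} (hκ : Kernel.Invariant κ ν) (j : ℕ) :
    Kernel.Invariant (κ ^ j) ν := by
  induction j with
  | zero => exact Measure.id_comp
  | succ j ih => exact ih.comp hκ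

/-- The transition kernel at time `r` of the continuous-time Markov chain that jumps at rate one
according to `κ`, that is `exp (r * (κ - 1))`: the number of jumps is Poisson of rate `r`. -/
noncomputable def jumpSemigroup (κ : Kernel E E) (r : ℝ≥0) : Kernel E E :=
  kernelMixture (poissonMeasure r) fun j => κ ^ j

/-- The solution `z ↦ exp (z * (κ - 1)) g` of `∂u/∂z = κ u - u` with initial value `g`. It is the
action of `jumpSemigroup` on `g`, extended to real times. -/
noncomputable def jumpFlow (κ : Kernel E E) (g : E → ℝ) (z : ℝ) (x : E) : ℝ :=
  poissonMean (fun j => ∫ y, g y ∂(κ ^ j) x) z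

instance isMarkovKernel_jumpSemigroup [IsMarkovKernel κ] (r : ℝ≥0) :
    IsMarkovKernel (jumpSemigroup κ r) :=
  isMarkovKernel_kernelMixture _ _

theorem invariant_jumpSemigroup {ν : Measure E} (hκ : Kernel.Invariant κ ν) (r : ℝ≥0) :
    Kernel.Invariant (jumpSemigroup κ r) ν :=
  invariant_kernelMixture _ (invariant_pow hκ)

theorem jumpFlow_zero {g : E → ℝ} (hg : Measurable g) (x : E) : jumpFlow κ g 0 x = g x := by
  rw [jumpFlow, poissonMean_zero]
  exact integral_dirac' g x hg.stronglyMeasurable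

variable [IsMarkovKernel κ] {g : E → ℝ} {C : ℝ}

theorem integral_jumpSemigroup (hg : Measurable g) (hgC : ∀ x, |g x| ≤ C) (r : ℝ≥0) (x : E) :
    ∫ y, g y ∂jumpSemigroup κ r x = jumpFlow κ g r x := by
  rw [jumpSemigroup, integral_kernelMixture, integral_poissonMeasure_eq_poissonMean, jumpFlow]
  exact integrable_of_abs_le hg hgC

theorem integral_jumpFlow (hg : Measurable g) (hgC : ∀ x, |g x| ≤ C) {z : ℝ} (hz : 0 ≤ z) (x : E) :
    ∫ y, jumpFlow κ g z y ∂κ x = poissonMean (fun j => ∫ y, g y ∂(κ ^ (j + 1)) x) z := by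
  lift z to ℝ≥0 using hz
  simp only [← integral_jumpSemigroup hg hgC]
  rw [← Kernel.integral_comp (integrable_of_abs_le hg hgC), jumpSemigroup, kernelMixture_comp,
    integral_kernelMixture (integrable_of_abs_le hg hgC), integral_poissonMeasure_eq_poissonMean]
  rfl

theorem measurable_jumpFlow (hg : Measurable g) (hgC : ∀ x, |g x| ≤ C) {z : ℝ} (hz : 0 ≤ z) :
    Measurable (jumpFlow κ g z) := by
  lift z to ℝ≥0 using hz
  rw [← funext (integral_jumpSemigroup (κ := κ) hg hgC z)]
  exact hg.stronglyMeasurable.integral_kernel.measurable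

theorem abs_jumpFlow_le (hg : Measurable g) (hgC : ∀ x, |g x| ≤ C) {z : ℝ} (hz : 0 ≤ z) (x : E) :
    |jumpFlow κ g z x| ≤ C := by
  lift z to ℝ≥0 using hz
  rw [← integral_jumpSemigroup hg hgC]
  exact abs_integral_le_of_abs_le hgC

theorem jumpFlow_nonneg (hg : Measurable g) (hgC : ∀ x, |g x| ≤ C) (hg0 : ∀ x, 0 ≤ g x) {z : ℝ}
    (hz : 0 ≤ z) (x : E) : 0 ≤ jumpFlow κ g z x := by
  lift z to ℝ≥0 using hz
  rw [← integral_jumpSemigroup hg hgC]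
  exact integral_nonneg hg0

theorem hasDerivAt_jumpFlow (hg : Measurable g) (hgC : ∀ x, |g x| ≤ C) {z : ℝ} (hz : 0 ≤ z)
    (x : E) : HasDerivAt (jumpFlow κ g · x)
      (∫ y, jumpFlow κ g z y ∂κ x - jumpFlow κ g z x) z := by
  rw [integral_jumpFlow hg hgC hz]
  exact hasDerivAt_poissonMean (fun j => abs_integral_le_of_abs_le hgC) z

theorem integral_le_integral_jumpFlow_add (hg : Measurable g) (hgC : ∀ x, |g x| ≤ C) {z : ℝ}
    (hz : 0 ≤ z) {u : E → ℝ} {D B : ℝ} (hu : Measurable u) (huD : ∀ x, |u x| ≤ D)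
    (huB : ∀ x, u x ≤ jumpFlow κ g z x + B) (x : E) :
    ∫ y, u y ∂κ x ≤ ∫ y, jumpFlow κ g z y ∂κ x + B := by
  have hint : Integrable (jumpFlow κ g z) (κ x) :=
    integrable_of_abs_le (measurable_jumpFlow hg hgC hz) (abs_jumpFlow_le hg hgC hz)
  refine (integral_mono (integrable_of_abs_le hu huD) (hint.add (integrable_const B))
    huB).trans_eq ?_
  simp [integral_add hint (integrable_const B)]

end JumpSemigroup

section Comparison

variable {E : Type*} [MeasurableSpace E]

/-- A function `γ` on `[s, T]`, bounded by `S`, that satisfies `∂γ/∂t ≤ a * (κ γ⁺ - γ)` wherever it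
is positive. Nothing is required of the time derivative where `γ ≤ 0`. -/
structure IsJumpSubsolution (κ : Kernel E E) (a s T S : ℝ) (γ : ℝ → E → ℝ) : Prop where
  continuousOn : ∀ x, ContinuousOn (γ · x) (Icc s T)
  measurable : ∀ t ∈ Icc s T, Measurable (γ t)
  abs_le : ∀ t ∈ Icc s T, ∀ x, |γ t x| ≤ S
  deriv_le : ∀ t ∈ Ioo s T, ∀ x, 0 < γ t x →
    ∃ d ≤ a * (∫ y, max (γ t y) 0 ∂κ x - γ t x), HasDerivAt (γ · x) d t

namespace IsJumpSubsolution

variable {κ : Kernel E E} {a s T S : ℝ} {γ : ℝ → E → ℝ}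

theorem mono (hγ : IsJumpSubsolution κ a s T S γ) {s' T' : ℝ} (hs : s ≤ s') (hT : T' ≤ T) :
    IsJumpSubsolution κ a s' T' S γ where
  continuousOn x := (hγ.continuousOn x).mono (Icc_subset_Icc hs hT)
  measurable t ht := hγ.measurable t (Icc_subset_Icc hs hT ht)
  abs_le t ht := hγ.abs_le t (Icc_subset_Icc hs hT ht)
  deriv_le t ht := hγ.deriv_le t (Ioo_subset_Ioo hs hT ht)

theorem measurable_posPart (hγ : IsJumpSubsolution κ a s T S γ) {t : ℝ} (ht : t ∈ Icc s T) :
    Measurable fun x => max (γ t x) 0 :=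
  (hγ.measurable t ht).max measurable_const

theorem abs_posPart_le (hγ : IsJumpSubsolution κ a s T S γ) {t : ℝ} (ht : t ∈ Icc s T) (x : E) :
    |max (γ t x) 0| ≤ S := by
  have := hγ.abs_le t ht x
  grind

variable [IsMarkovKernel κ]

theorem sub_jumpFlow_le_of_sub_jumpFlow_le (hγ : IsJumpSubsolution κ a s T S γ) (ha : 0 ≤ a)
    {B : ℝ} (hB0 : 0 ≤ B)
    (hB : ∀ r ∈ Icc s T, ∀ x, γ r x - jumpFlow κ (fun y => max (γ s y) 0) (a * (r - s)) x ≤ B)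
    {t : ℝ} (ht : t ∈ Icc s T) (x : E) :
    γ t x - jumpFlow κ (fun y => max (γ s y) 0) (a * (t - s)) x
      ≤ B * (1 - Real.exp (-(a * (t - s)))) := by
  have hs : s ∈ Icc s T := left_mem_Icc.2 (ht.1.trans ht.2)
  set g : E → ℝ := fun y => max (γ s y) 0
  have hg : Measurable g := hγ.measurable_posPart hs
  have hgS : ∀ y, |g y| ≤ S := hγ.abs_posPart_le hs
  have hflow : ∀ r, s ≤ r → ∀ y, HasDerivAt (fun r => jumpFlow κ g (a * (r - s)) y)
      (a * (∫ z, jumpFlow κ g (a * (r - s)) z ∂κ y - jumpFlow κ g (a * (r - s)) y)) r := by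
    intro r hr y
    rw [mul_comm a]
    exact (hasDerivAt_jumpFlow hg hgS (mul_nonneg ha (sub_nonneg.2 hr)) y).comp r
      (hasDerivAt_mul_sub_const a s r)
  refine le_mul_one_sub_exp_of_hasDerivAt (f := fun r => γ r x - jumpFlow κ g (a * (r - s)) x)
    ht.1 ha hB0 ?_ ?_ fun r hr hpos => ?_
  · exact ((hγ.continuousOn x).mono (Icc_subset_Icc_right ht.2)).sub fun r hr =>
      (hflow r hr.1 x).continuousAt.continuousWithinAt
  · simp only [sub_self, mul_zero, jumpFlow_zero hg, g]
    linarith [le_max_left (γ s x) 0]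
  · have hz : 0 ≤ a * (r - s) := mul_nonneg ha (sub_nonneg.2 hr.1.le)
    have hrT : r ∈ Ioo s T := Ioo_subset_Ioo_right ht.2 hr
    have hr' : r ∈ Icc s T := Ioo_subset_Icc_self hrT
    have hflow0 := jumpFlow_nonneg (κ := κ) hg hgS (fun y => le_max_right (γ s y) 0) hz
    have hmean := integral_le_integral_jumpFlow_add (κ := κ) hg hgS hz
      (hγ.measurable_posPart hr') (hγ.abs_posPart_le hr')
      (fun y => max_le (sub_le_iff_le_add'.1 (hB r hr' y)) (add_nonneg (hflow0 y) hB0)) x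
    obtain ⟨d, hd, hγd⟩ := hγ.deriv_le r hrT x ((hflow0 x).trans_lt (sub_pos.1 hpos))
    refine ⟨_, ?_, hγd.sub (hflow r hr.1.le x)⟩
    linarith [mul_le_mul_of_nonneg_left hmean ha]

theorem posPart_le_jumpFlow (hγ : IsJumpSubsolution κ a s T S γ) (ha : 0 ≤ a) (hsT : s ≤ T)
    (x : E) : max (γ T x) 0 ≤ jumpFlow κ (fun y => max (γ s y) 0) (a * (T - s)) x := by
  have hs : s ∈ Icc s T := left_mem_Icc.2 hsT
  have hflow0 : ∀ r ∈ Icc s T, ∀ y,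
      0 ≤ jumpFlow κ (fun y => max (γ s y) 0) (a * (r - s)) y := fun r hr =>
    jumpFlow_nonneg (hγ.measurable_posPart hs) (hγ.abs_posPart_le hs)
      (fun y => le_max_right (γ s y) 0) (mul_nonneg ha (sub_nonneg.2 hr.1))
  let excess : Icc s T × E → ℝ := fun q =>
    max (γ q.1 q.2 - jumpFlow κ (fun y => max (γ s y) 0) (a * (q.1 - s)) q.2) 0
  have hbdd : BddAbove (range excess) := by
    refine ⟨S, forall_mem_range.2 fun q => ?_⟩
    have := hγ.abs_posPart_le q.1.2 q.2
    have := hflow0 q.1 q.1.2 q.2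
    grind
  have himprove : ∀ B, (∀ q, excess q ≤ B) →
      ∀ q, excess q ≤ 0 + (1 - Real.exp (-(a * (T - s)))) * B := by
    rintro B hB ⟨⟨t, ht⟩, y⟩
    have hB0 : 0 ≤ B := (le_max_right _ _).trans (hB ⟨⟨t, ht⟩, y⟩)
    have hθ : Real.exp (-(a * (T - s))) ≤ Real.exp (-(a * (t - s))) := by
      gcongr
      exact ht.2
    have hθ1 : Real.exp (-(a * (T - s))) ≤ 1 :=
      Real.exp_le_one_iff.2 (neg_nonpos.2 (mul_nonneg ha (sub_nonneg.2 hsT)))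
    have := hγ.sub_jumpFlow_le_of_sub_jumpFlow_le ha hB0
      (fun r hr z => (le_max_left _ _).trans (hB ⟨⟨r, hr⟩, z⟩)) ht y
    refine max_le ?_ ?_ <;> nlinarith
  have hexcess := le_div_one_sub_of_forall_upperBound (by simp [Real.exp_pos]) hbdd himprove
    (⟨T, right_mem_Icc.2 hsT⟩, x)
  rw [zero_div] at hexcess
  exact max_le (sub_nonpos.1 ((le_max_left _ _).trans hexcess)) (hflow0 T (right_mem_Icc.2 hsT) x)

theorem integral_rpow_posPart_le {ν : Measure E} (hκ : Kernel.Invariant κ ν)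
    (hγ : IsJumpSubsolution κ a s T S γ) (ha : 0 ≤ a) (hsT : s ≤ T) {p : ℝ} (hp : 1 ≤ p)
    (hint : Integrable (fun x => max (γ s x) 0 ^ p) ν) :
    Integrable (fun x => max (γ T x) 0 ^ p) ν ∧
      ∫ x, max (γ T x) 0 ^ p ∂ν ≤ ∫ x, max (γ s x) 0 ^ p ∂ν := by
  have hs : s ∈ Icc s T := left_mem_Icc.2 hsT
  have hmeas := hγ.measurable_posPart hs
  have hbound := hγ.abs_posPart_le hs
  refine integral_rpow_le_of_le_integral_kernel (C := S)
    (invariant_jumpSemigroup hκ (a * (T - s)).toNNReal) hp hmeas (fun x => le_max_right _ _)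
    (fun x => (le_abs_self _).trans (hbound x)) hint (hγ.measurable_posPart (right_mem_Icc.2 hsT))
    (fun x => le_max_right _ _) fun x => ?_
  rw [integral_jumpSemigroup hmeas hbound,
    Real.coe_toNNReal _ (mul_nonneg ha (sub_nonneg.2 hsT))]
  exact hγ.posPart_le_jumpFlow ha hsT x

end IsJumpSubsolution

end Comparison

end MarkovKernels

section RandomWalk

open ProbabilityTheory

theorem abs_integral_comp_sub_mul_le {G : Type*} [AddGroup G] [MeasurableSpace G] [MeasurableAdd G]
    [MeasurableNeg G] {ν : Measure G} [ν.IsAddLeftInvariant] [ν.IsNegInvariant]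
    {k h : G → ℝ} {C : ℝ} (hk0 : ∀ x, 0 ≤ k x) (hk : Integrable k ν) (hC : ∀ y, |h y| ≤ C) (x : G) :
    |∫ y, k (x - y) * h y ∂ν| ≤ (∫ y, k y ∂ν) * C := by
  rw [← integral_sub_left_eq_self k ν x, ← integral_mul_const, ← Real.norm_eq_abs]
  refine norm_integral_le_of_norm_le ((hk.comp_sub_left x).mul_const C) (ae_of_all _ fun y => ?_)
  rw [Real.norm_eq_abs, abs_mul, abs_of_nonneg (hk0 _)]
  exact mul_le_mul_of_nonneg_left (hC y) (hk0 _)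

theorem isProbabilityMeasure_withDensity_ofReal {α : Type*} [MeasurableSpace α] {ν : Measure α}
    {k : α → ℝ} (hk0 : ∀ x, 0 ≤ k x) (hk1 : ∫ x, k x ∂ν = 1) :
    IsProbabilityMeasure (ν.withDensity fun x => ENNReal.ofReal (k x)) := by
  refine ⟨?_⟩
  rw [withDensity_apply _ .univ, Measure.restrict_univ,
    ← ofReal_integral_eq_lintegral_ofReal (integrable_of_integral_eq_one hk1) (ae_of_all _ hk0),
    hk1, ENNReal.ofReal_one]

variable {G : Type*} [AddGroup G] [MeasurableSpace G] [MeasurableAdd₂ G] [MeasurableNeg G]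

/-- The kernel sending `x` to the law of `x - Y`, for `Y` of law `μ`. For `μ` of density `k` it acts
on functions as the convolution with `k`. -/
noncomputable def randomWalkKernel (μ : Measure G) : Kernel G G :=
  (Kernel.id ×ₖ Kernel.const G μ).map fun z => z.1 - z.2

theorem randomWalkKernel_apply (μ : Measure G) [SFinite μ] (x : G) :
    randomWalkKernel μ x = μ.map (x - ·) := by
  rw [randomWalkKernel, Kernel.map_apply _ measurable_sub, Kernel.prod_apply, Kernel.id_apply,
    Kernel.const_apply, Measure.dirac_prod, Measure.map_map measurable_sub (by fun_prop)]
  rfl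

instance isMarkovKernel_randomWalkKernel (μ : Measure G) [IsProbabilityMeasure μ] :
    IsMarkovKernel (randomWalkKernel μ) :=
  Kernel.IsMarkovKernel.map _ measurable_sub

theorem integral_randomWalkKernel {μ : Measure G} [SFinite μ] {g : G → ℝ} (hg : Measurable g)
    (x : G) : ∫ y, g y ∂randomWalkKernel μ x = ∫ y, g (x - y) ∂μ := by
  rw [randomWalkKernel_apply, integral_map (by fun_prop) hg.aestronglyMeasurable]

theorem invariant_randomWalkKernel (μ : Measure G) [IsProbabilityMeasure μ] (ν : Measure G)
    [SFinite ν] [ν.IsAddRightInvariant] :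
    Kernel.Invariant (randomWalkKernel μ) ν := by
  ext s hs
  have hsub : MeasurableSet ((fun z : G × G => z.1 - z.2) ⁻¹' s) := measurable_sub hs
  calc (ν.bind (randomWalkKernel μ)) s = ∫⁻ x, μ ((x - ·) ⁻¹' s) ∂ν := by
        rw [Measure.bind_apply hs (Kernel.aemeasurable _)]
        exact lintegral_congr fun x => by
          rw [randomWalkKernel_apply, Measure.map_apply (by fun_prop) hs]
    _ = (ν.prod μ) ((fun z => (z.1 - z.2, z.2)) ⁻¹' (s ×ˢ Set.univ)) := by
        rw [Set.mk_preimage_prod, Set.preimage_univ, Set.inter_univ, Measure.prod_apply hsub]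
        rfl
    _ = ν s := by
        rw [(measurePreserving_sub_prod ν μ).measure_preimage
          (hs.prod .univ).nullMeasurableSet, Measure.prod_prod, measure_univ, mul_one]

theorem integral_randomWalkKernel_withDensity {H : Type*} [AddCommGroup H] [MeasurableSpace H]
    [MeasurableAdd₂ H] [MeasurableNeg H] {ν : Measure H} [SFinite ν]
    [ν.IsAddLeftInvariant] [ν.IsNegInvariant] {k g : H → ℝ} (hk0 : ∀ x, 0 ≤ k x)
    (hk : Integrable k ν) (hg : Measurable g) (x : H) :
    ∫ y, g y ∂randomWalkKernel (ν.withDensity fun y => ENNReal.ofReal (k y)) x =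
      ∫ y, k (x - y) * g y ∂ν := by
  rw [integral_randomWalkKernel hg, integral_withDensity_eq_integral_toReal_smul₀
    hk.aemeasurable.ennreal_ofReal (ae_of_all _ fun _ => ENNReal.ofReal_lt_top),
    ← integral_sub_left_eq_self (fun y => k (x - y) * g y) ν x]
  simp only [sub_sub_cancel, ENNReal.toReal_ofReal (hk0 _), smul_eq_mul]

end RandomWalk

section Stefan

variable {n : ℕ} {a b ℓ₀ : ℝ} {k η : EuclideanSpace ℝ (Fin n) → ℝ}
  {γ : ℝ → EuclideanSpace ℝ (Fin n) → ℝ}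

namespace IsTwoPhaseStefanSol

theorem exists_forall_abs_le (hγ : IsTwoPhaseStefanSol a b ℓ₀ k η γ) (ha : 0 ≤ a) (hb : 0 ≤ b)
    (hℓ₀ : 0 ≤ ℓ₀) (hk0 : ∀ x, 0 ≤ k x) (hη0 : ∀ x, 0 ≤ η x) (hk : Integrable k)
    (hη : Integrable η) (T : ℝ) : ∃ S, ∀ t ∈ Set.Icc 0 T, ∀ x, |γ t x| ≤ S := by
  obtain ⟨hcont, -, hbdd, hderiv⟩ := hγ
  have hIk : 0 ≤ ∫ x, k x := integral_nonneg hk0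
  have hIη : 0 ≤ ∫ x, η x := integral_nonneg hη0
  refine exists_forall_abs_le_of_abs_deriv_le
    (L := a * ((∫ x, k x) + 1) + b * ((∫ x, η x) + 1)) (by positivity) hcont hbdd hderiv ?_ T
  intro t _ C hC x
  have hpos : ∀ y, |max (γ t y) 0| ≤ C := fun y => by grind
  have hneg : ∀ y, |min (γ t y + ℓ₀) 0| ≤ C := fun y => by grind
  have hkC := abs_integral_comp_sub_mul_le hk0 hk hpos x
  have hηC := abs_integral_comp_sub_mul_le hη0 hη hneg x
  have hfirst := mul_le_mul_of_nonneg_left ((abs_sub _ _).trans (add_le_add hkC (hpos x))) ha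
  have hsecond := mul_le_mul_of_nonneg_left ((abs_sub _ _).trans (add_le_add hηC (hneg x))) hb
  refine (abs_add_le _ _).trans ?_
  rw [abs_mul, abs_mul, abs_of_nonneg ha, abs_of_nonneg hb]
  linarith

theorem exists_isJumpSubsolution (hγ : IsTwoPhaseStefanSol a b ℓ₀ k η γ) (ha : 0 ≤ a) (hb : 0 ≤ b)
    (hℓ₀ : 0 ≤ ℓ₀) (hk0 : ∀ x, 0 ≤ k x) (hη0 : ∀ x, 0 ≤ η x) (hk : Integrable k)
    (hη : Integrable η) (T : ℝ) : ∃ S, IsJumpSubsolution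
      (randomWalkKernel (volume.withDensity fun x => ENNReal.ofReal (k x))) a 0 T S γ := by
  obtain ⟨S, hS⟩ := hγ.exists_forall_abs_le ha hb hℓ₀ hk0 hη0 hk hη T
  obtain ⟨hcont, hmeas, -, hderiv⟩ := hγ
  refine ⟨S, fun x => (hcont x).mono Set.Icc_subset_Ici_self, fun t _ => hmeas t, hS,
    fun t ht x hpos => ⟨_, ?_, hderiv t ht.1 x⟩⟩
  have hcold : ∫ y, η (x - y) * min (γ t y + ℓ₀) 0 ≤ 0 :=
    integral_nonpos fun y => mul_nonpos_of_nonneg_of_nonpos (hη0 _) (min_le_right _ _)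
  rw [integral_randomWalkKernel_withDensity hk0 hk ((hmeas t).max measurable_const),
    max_eq_left hpos.le, min_eq_right (add_nonneg hpos.le hℓ₀), sub_zero]
  exact add_le_of_nonpos_right (mul_nonpos_of_nonneg_of_nonpos hb hcold)

end IsTwoPhaseStefanSol

theorem stmt_7_general {p : ℝ} (ha : 0 ≤ a) (hb : 0 ≤ b) (hℓ₀ : 0 ≤ ℓ₀)
    (hk0 : ∀ x, 0 ≤ k x) (hη0 : ∀ x, 0 ≤ η x) (hη : Integrable η) (hk1 : ∫ x, k x = 1)
    (hγ : IsTwoPhaseStefanSol a b ℓ₀ k η γ) (hp : 1 ≤ p)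
    (hint : Integrable fun x => max (γ 0 x) 0 ^ p) :
    (∀ t ≥ 0, Integrable fun x => max (γ t x) 0 ^ p) ∧
      AntitoneOn (fun t => ∫ x, max (γ t x) 0 ^ p) (Set.Ici 0) := by
  have := isProbabilityMeasure_withDensity_ofReal hk0 hk1
  have hk : Integrable k := integrable_of_integral_eq_one hk1
  have hinv := invariant_randomWalkKernel (volume.withDensity fun x => ENNReal.ofReal (k x)) volume
  have decay : ∀ s t, 0 ≤ s → s ≤ t → Integrable (fun x => max (γ s x) 0 ^ p) →
      Integrable (fun x => max (γ t x) 0 ^ p) ∧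
        ∫ x, max (γ t x) 0 ^ p ≤ ∫ x, max (γ s x) 0 ^ p := fun s t hs hst hsp =>
    have ⟨_, hsub⟩ := hγ.exists_isJumpSubsolution ha hb hℓ₀ hk0 hη0 hk hη t
    (hsub.mono hs le_rfl).integral_rpow_posPart_le hinv ha hst hp hsp
  have hLp : ∀ t ≥ 0, Integrable fun x => max (γ t x) 0 ^ p := fun t ht =>
    (decay 0 t le_rfl ht hint).1
  exact ⟨hLp, fun s hs t _ hst => (decay s t hs hst (hLp s hs)).2⟩

end Stefan

/-- Monotone decay of the `L^p` norm of the positive part `γ⁺` for the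
nonlocal two-phase Stefan problem. -/
theorem stmt_7 (n : ℕ) (hn : 0 < n) (a b ℓ₀ : ℝ) (ha : 0 < a) (hb : 0 < b)
    (hℓ₀ : 0 < ℓ₀)
    (k η : EuclideanSpace ℝ (Fin n) → ℝ)
    (hk_nonneg : ∀ x, 0 ≤ k x) (hη_nonneg : ∀ x, 0 ≤ η x)
    (hk_integrable : Integrable k) (hη_integrable : Integrable η)
    (hk_int : ∫ x, k x = 1) (hη_int : ∫ x, η x = 1)
    (γ : ℝ → EuclideanSpace ℝ (Fin n) → ℝ)
    (hγ : IsTwoPhaseStefanSol a b ℓ₀ k η γ)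
    (p : ℝ) (hp : 1 < p)
    (hLp : ∀ t ≥ (0:ℝ), Integrable (fun x => (max (γ t x) 0) ^ p)) :
    (∀ t > (0:ℝ), deriv (fun s => ∫ x, (max (γ s x) 0) ^ p) t ≤ 0) ∧
    (∀ t > (0:ℝ), ∫ x, (max (γ t x) 0) ^ p ≤ ∫ x, (max (γ 0 x) 0) ^ p) := by
  have hanti := (stmt_7_general ha.le hb.le hℓ₀.le hk_nonneg hη_nonneg hη_integrable
    hk_int hγ hp.le (hLp 0 le_rfl)).2
  exact ⟨fun t ht => (derivWithin_of_mem_nhds (Ici_mem_nhds ht)).symm.trans_le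
    hanti.derivWithin_nonpos, fun t ht => hanti Set.self_mem_Ici ht.le ht.le⟩
end

section
/- Let γ solve the nonlocal two-phase Stefan problem with kernels satisfying (K) and initial data γ₀ ∈ L^∞(ℝ^n) with γ₀ = -α₀ outside a bounded smooth domain Ω₀, α₀ ∈ (0, ℓ₀). Then for every t > 0 and every h ∈ ℝ^n, ∫_{ℝ^n} |γ(t, x+h) - γ(t,x)| dx ≤ ∫_{ℝ^n} |γ₀(x+h) - γ₀(x)| dx. -/
open MeasureTheory Filter

/-!
For a shift `h` put `D = γ(·, · + h) - γ`. Convolution commutes with translations, so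
`∂ₜD = gain - loss`, where `loss` is a nonnegative combination of translate differences of monotone
functions of `γ` and `gain` is the same combination of their convolutions with the kernels. By
monotonicity `loss` has the sign of `D`, hence `|D|` has a right derivative of at most
`|gain| - |loss|`; by Young's inequality the `L¹` mass of `gain` is at most that of `loss`.
Integrating over space and time gives the contraction as long as the mass `∫ |D|` is bounded on
compact time intervals.

Boundedness comes from pointwise continuity in time: by Fatou's lemma the mass is a finite lower
semicontinuous function of time, so by Baire's theorem it is bounded on a relatively open piece of
the closed set of times where it fails to be locally bounded. On short intervals where the mass is
bounded, its values are comparable up to a factor `2`, so the bound spreads from that piece to the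
neighbouring good times, and the bad set is empty.
-/

open Set Function Metric
open scoped Topology Convolution

section LocalBoundedness

theorem isOpen_setOf_isBoundedUnder_nhds {X α : Type*} [TopologicalSpace X] [LE α] (m : X → α) :
    IsOpen {t | IsBoundedUnder (· ≤ ·) (𝓝 t) m} := by
  rw [isOpen_iff_mem_nhds]
  rintro t ⟨S, hS⟩
  filter_upwards [eventually_eventually_nhds.2 hS] with r hr
  exact ⟨S, hr⟩

theorem bddAbove_image_of_isBoundedUnder_nhds {X α : Type*} [TopologicalSpace X]
    [SemilatticeSup α] [Nonempty α] {m : X → α} {K : Set X} (hK : IsCompact K)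
    (hm : ∀ t ∈ K, IsBoundedUnder (· ≤ ·) (𝓝 t) m) : BddAbove (m '' K) := by
  refine hK.induction_on (p := fun K => BddAbove (m '' K)) (by simp)
    (fun _ _ hst ht => ht.mono (image_mono hst))
    (fun _ _ hs ht => by simpa only [image_union] using hs.union ht) fun t ht => ?_
  obtain ⟨S, hS⟩ := hm t ht
  exact ⟨_, mem_nhdsWithin_of_mem_nhds hS, S, forall_mem_image.2 fun _ hr => hr⟩

theorem exists_forall_mem_inter_ball_le_of_lowerSemicontinuous {X : Type*} [PseudoMetricSpace X]
    [CompleteSpace X] {m : X → ℝ} (hm : LowerSemicontinuous m) {B : Set X} (hB : IsClosed B)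
    (hne : B.Nonempty) : ∃ t₀ ∈ B, ∃ ε > 0, ∃ N, ∀ t ∈ B ∩ ball t₀ ε, m t ≤ N := by
  have : Nonempty B := hne.to_subtype
  have : CompleteSpace B := hB.completeSpace_coe
  obtain ⟨N, t₀, ht₀⟩ := nonempty_interior_of_iUnion_of_closed
    (f := fun N : ℕ => {t : B | m t ≤ N})
    (fun N => (hm.comp continuous_subtype_val).isClosed_preimage N)
    (iUnion_eq_univ_iff.2 fun t => exists_nat_ge (m t))
  obtain ⟨ε, hε, hball⟩ := Metric.mem_nhds_iff.1 (mem_interior_iff_mem_nhds.1 ht₀)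
  exact ⟨t₀, t₀.2, ε, hε, N, fun t ht => @hball ⟨t, ht.1⟩ ht.2⟩

variable {E : Type*} [NormedAddCommGroup E] [NormedSpace ℝ E] [ProperSpace E] {m : E → ℝ}
  {C δ : ℝ}

theorem le_mul_of_isBoundedUnder_on_ball
    (hm : ∀ s t, dist s t ≤ δ → BddAbove (m '' segment ℝ s t) → m t ≤ C * m s) {s t : E}
    (hst : dist s t ≤ δ) (hball : ∀ r ∈ ball t (dist s t), IsBoundedUnder (· ≤ ·) (𝓝 r) m) :
    m t ≤ C * m s := by
  refine hm s t hst ⟨max (m s) (C * m t), forall_mem_image.2 fun r hr => ?_⟩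
  rcases eq_or_ne r s with rfl | hrs
  · exact le_max_left _ _
  have hdist : dist t r < dist s t := by
    have := dist_add_dist_of_mem_segment hr
    have := dist_pos.2 hrs.symm
    rw [dist_comm t r]
    linarith
  have hbdd : BddAbove (m '' closedBall t (dist t r)) :=
    bddAbove_image_of_isBoundedUnder_nhds (isCompact_closedBall _ _) fun z hz =>
      hball z (closedBall_subset_ball hdist hz)
  -- The hypothesis is used backwards, from `t` to `r`, to bound `m` near the endpoint `s`.
  exact le_max_of_le_right <|
    hm t r (hdist.le.trans hst) (hbdd.mono (image_mono (segment_subset_closedBall_left t r)))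

theorem isBoundedUnder_nhds_of_lowerSemicontinuous (hlsc : LowerSemicontinuous m) (hδ : 0 < δ)
    (hC : 0 ≤ C) (hm : ∀ s t, dist s t ≤ δ → BddAbove (m '' segment ℝ s t) → m t ≤ C * m s)
    (t : E) : IsBoundedUnder (· ≤ ·) (𝓝 t) m := by
  by_contra ht
  set B : Set E := {t | IsBoundedUnder (· ≤ ·) (𝓝 t) m}ᶜ
  have hB : IsClosed B := (isOpen_setOf_isBoundedUnder_nhds m).isClosed_compl
  obtain ⟨t₀, ht₀, ε, hε, N, hN⟩ :=
    exists_forall_mem_inter_ball_le_of_lowerSemicontinuous hlsc hB ⟨t, ht⟩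
  refine ht₀ ⟨C * N, eventually_map.2 ?_⟩
  filter_upwards [ball_mem_nhds t₀ (lt_min (half_pos hε) hδ)] with r hr
  obtain ⟨hrε, hrδ⟩ := lt_min_iff.1 (mem_ball.1 hr)
  obtain ⟨c, hc, hrc⟩ := hB.exists_infDist_eq_dist ⟨t₀, ht₀⟩ r
  have hcr : dist c r ≤ dist r t₀ := by
    rw [dist_comm c r, ← hrc]
    exact infDist_le_dist_of_mem ht₀
  have hct₀ : dist c t₀ < ε := by linarith [dist_triangle c r t₀]
  calc m r ≤ C * m c := by
        refine le_mul_of_isBoundedUnder_on_ball hm (hcr.trans hrδ.le) fun r' hr' => ?_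
        by_contra hr'B
        have : dist c r ≤ dist r' r := by
          rw [dist_comm c r, ← hrc, dist_comm r' r]
          exact infDist_le_dist_of_mem hr'B
        exact this.not_gt hr'
    _ ≤ C * N := by gcongr; exact hN c ⟨hc, hct₀⟩

end LocalBoundedness

section RightDerivativeOfAbs

variable {g : ℝ → ℝ} {g' t : ℝ}

theorem hasDerivWithinAt_abs_Ioi_of_eq_zero (hg : HasDerivWithinAt g g' (Ioi t) t)
    (h0 : g t = 0) : HasDerivWithinAt (fun s => |g s|) |g'| (Ioi t) t := by
  rw [hasDerivWithinAt_iff_tendsto_slope' self_notMem_Ioi] at hg ⊢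
  refine hg.abs.congr' ?_
  filter_upwards [self_mem_nhdsWithin] with s hs
  simp only [slope_def_field, h0, abs_zero, sub_zero, abs_div,
    abs_of_pos (sub_pos.2 (mem_Ioi.1 hs))]

theorem exists_hasDerivWithinAt_abs_Ioi (hg : HasDerivWithinAt g g' (Ioi t) t) :
    ∃ w, |w| = |g'| ∧ HasDerivWithinAt (fun s => |g s|) w (Ioi t) t := by
  rcases lt_trichotomy (g t) 0 with hneg | h0 | hpos
  · exact ⟨_, by simp, (hasDerivAt_abs_neg hneg).comp_hasDerivWithinAt t hg⟩
  · exact ⟨_, abs_abs g', hasDerivWithinAt_abs_Ioi_of_eq_zero hg h0⟩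
  · exact ⟨_, by simp, (hasDerivAt_abs_pos hpos).comp_hasDerivWithinAt t hg⟩

theorem exists_le_hasDerivWithinAt_abs_Ioi {F H : ℝ} (hg : HasDerivWithinAt g (F - H) (Ioi t) t)
    (hsign : 0 ≤ H * g t) (hzero : g t = 0 → H = 0) :
    ∃ w ≤ |F| - |H|, HasDerivWithinAt (fun s => |g s|) w (Ioi t) t := by
  rcases lt_trichotomy (g t) 0 with hneg | h0 | hpos
  · refine ⟨_, ?_, (hasDerivAt_abs_neg hneg).comp_hasDerivWithinAt t hg⟩
    rw [abs_of_nonpos (nonpos_of_mul_nonneg_left hsign hneg)]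
    linarith [neg_abs_le F]
  · refine ⟨_, ?_, hasDerivWithinAt_abs_Ioi_of_eq_zero hg h0⟩
    simp [hzero h0]
  · refine ⟨_, ?_, (hasDerivAt_abs_pos hpos).comp_hasDerivWithinAt t hg⟩
    rw [abs_of_nonneg (nonneg_of_mul_nonneg_left hsign hpos)]
    linarith [le_abs_self F]

end RightDerivativeOfAbs

section ParametricIntegrals

variable {X : Type*} [MeasurableSpace X] {μ : Measure X}

theorem lowerSemicontinuous_integral_norm {T E : Type*} [TopologicalSpace T]
    [FirstCountableTopology T] [NormedAddCommGroup E] {u : T → X → E}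
    (hu : ∀ x, Continuous (u · x)) (hint : ∀ t, Integrable (u t) μ) :
    LowerSemicontinuous fun t => ∫ x, ‖u t x‖ ∂μ := by
  have hlsc : LowerSemicontinuous fun t => ∫⁻ x, ‖u t x‖ₑ ∂μ := by
    refine lowerSemicontinuous_iff_le_liminf.2 fun t => ?_
    calc ∫⁻ x, ‖u t x‖ₑ ∂μ = ∫⁻ x, liminf (fun r => ‖u r x‖ₑ) (𝓝 t) ∂μ := by
          simp only [((hu _).tendsto t).enorm.liminf_eq]
      _ ≤ liminf (fun r => ∫⁻ x, ‖u r x‖ₑ ∂μ) (𝓝 t) :=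
          lintegral_liminf_le' fun r => (hint r).aestronglyMeasurable.enorm
  simp only [← ofReal_integral_norm_eq_lintegral_enorm (hint _)] at hlsc
  intro t N hN
  rcases lt_or_ge N 0 with hneg | hnonneg
  · exact .of_forall fun r => hneg.trans_le (integral_nonneg fun _ => norm_nonneg _)
  · filter_upwards [hlsc t (.ofReal N) ((ENNReal.ofReal_lt_ofReal_iff_of_nonneg hnonneg).2 hN)]
      with r hr
    exact (ENNReal.ofReal_lt_ofReal_iff_of_nonneg hnonneg).1 hr

theorem integrable_uncurry_of_integral_norm_le [SFinite μ] {T E : Type*} [MeasurableSpace T]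
    [NormedAddCommGroup E] {ν : Measure T} [IsFiniteMeasure ν] {f : T → X → E}
    (hf : AEStronglyMeasurable (uncurry f) (ν.prod μ)) (hint : ∀ᵐ t ∂ν, Integrable (f t) μ)
    {S : ℝ} (hS : ∀ᵐ t ∂ν, ∫ x, ‖f t x‖ ∂μ ≤ S) : Integrable (uncurry f) (ν.prod μ) := by
  refine (integrable_prod_iff hf).2
    ⟨hint, .mono' (integrable_const S) hf.norm.integral_prod_right' ?_⟩
  filter_upwards [hS] with t ht
  rwa [Real.norm_of_nonneg (integral_nonneg fun _ => norm_nonneg _)]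

theorem integral_sub_integral_le_of_hasDerivWithinAt_Ioi [SFinite μ] {u f : ℝ → X → ℝ}
    {s t : ℝ} (hst : s ≤ t) (hu : ∀ x, ContinuousOn (u · x) (Icc s t))
    (hus : Integrable (u s) μ) (hut : Integrable (u t) μ)
    (hf : Integrable (uncurry f) ((volume.restrict (Ioc s t)).prod μ))
    (hderiv : ∀ r ∈ Ioo s t, ∀ x, ∃ u' ≤ f r x, HasDerivWithinAt (u · x) u' (Ioi r) r) :
    ∫ x, u t x ∂μ - ∫ x, u s x ∂μ ≤ ∫ r in Ioc s t, ∫ x, f r x ∂μ := by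
  have hpointwise : ∀ᵐ x ∂μ, u t x - u s x ≤ ∫ r in Ioc s t, f r x := by
    filter_upwards [hf.prod_left_ae] with x hfx
    choose! u' hu'f hu' using fun r hr => hderiv r hr x
    rw [← intervalIntegral.integral_of_le hst]
    exact intervalIntegral.sub_le_integral_of_hasDeriv_right_of_le hst (hu x) hu'
      (by rwa [integrableOn_Icc_iff_integrableOn_Ioc]) hu'f
  calc ∫ x, u t x ∂μ - ∫ x, u s x ∂μ = ∫ x, (u t x - u s x) ∂μ := (integral_sub hut hus).symm
    _ ≤ ∫ x, (∫ r in Ioc s t, f r x) ∂μ :=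
        integral_mono_ae (hut.sub hus) hf.integral_prod_right hpointwise
    _ = ∫ r in Ioc s t, ∫ x, f r x ∂μ := (integral_integral_swap hf).symm

end ParametricIntegrals

/-- The family `u` evolves on `[0, ∞)` by `∂ₜ u = gain - loss`, where `loss` has the sign of `u`
and is at most `L * |u|`, while `gain` has at most the `L¹` mass of `loss`. Values at negative
times are irrelevant, except that `gain` and `loss` are jointly measurable on all of `ℝ × X`. -/
structure IsGainLossEvolution {X : Type*} [MeasurableSpace X] (μ : Measure X) (L : ℝ)
    (u gain loss : ℝ → X → ℝ) : Prop where
  rate_nonneg : 0 ≤ L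
  continuousOn : ∀ x, ContinuousOn (u · x) (Ici 0)
  integrable : ∀ t ≥ 0, Integrable (u t) μ
  hasDerivAt : ∀ t > 0, ∀ x, HasDerivAt (u · x) (gain t x - loss t x) t
  measurable_loss : Measurable (uncurry loss)
  loss_mul_nonneg : ∀ t > 0, ∀ x, 0 ≤ loss t x * u t x
  abs_loss_le : ∀ t > 0, ∀ x, |loss t x| ≤ L * |u t x|
  measurable_gain : Measurable (uncurry gain)
  integrable_gain : ∀ t > 0, Integrable (gain t) μ
  integral_abs_gain_le : ∀ t > 0, ∫ x, |gain t x| ∂μ ≤ ∫ x, |loss t x| ∂μ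

namespace IsGainLossEvolution

variable {X : Type*} [MeasurableSpace X] {μ : Measure X} {L : ℝ} {u gain loss : ℝ → X → ℝ}
  {s t S : ℝ}

theorem integrable_loss (h : IsGainLossEvolution μ L u gain loss) (ht : 0 < t) :
    Integrable (loss t) μ :=
  ((h.integrable t ht.le).abs.const_mul L).mono'
    (h.measurable_loss.comp measurable_prodMk_left).aestronglyMeasurable
    (.of_forall (h.abs_loss_le t ht))

theorem integral_abs_loss_le (h : IsGainLossEvolution μ L u gain loss) (ht : 0 < t) :
    ∫ x, |loss t x| ∂μ ≤ L * ∫ x, |u t x| ∂μ := by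
  rw [← integral_const_mul]
  exact integral_mono (h.integrable_loss ht).abs ((h.integrable t ht.le).abs.const_mul L)
    (h.abs_loss_le t ht)

theorem integral_abs_loss_le_of_forall_le (h : IsGainLossEvolution μ L u gain loss)
    (hs : 0 ≤ s) (hS : ∀ r ∈ Icc s t, ∫ x, |u r x| ∂μ ≤ S) :
    ∀ r ∈ Ioc s t, ∫ x, |loss r x| ∂μ ≤ L * S := fun r hr =>
  (h.integral_abs_loss_le (hs.trans_lt hr.1)).trans
    (mul_le_mul_of_nonneg_left (hS r (Ioc_subset_Icc_self hr)) h.rate_nonneg)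

variable [SFinite μ]

theorem integrable_uncurry_loss (h : IsGainLossEvolution μ L u gain loss)
    (hs : 0 ≤ s) (hS : ∀ r ∈ Icc s t, ∫ x, |u r x| ∂μ ≤ S) :
    Integrable (uncurry loss) ((volume.restrict (Ioc s t)).prod μ) :=
  integrable_uncurry_of_integral_norm_le h.measurable_loss.aestronglyMeasurable
    (ae_restrict_of_forall_mem measurableSet_Ioc fun _ hr => h.integrable_loss (hs.trans_lt hr.1))
    (ae_restrict_of_forall_mem measurableSet_Ioc (h.integral_abs_loss_le_of_forall_le hs hS))

theorem integrable_uncurry_gain (h : IsGainLossEvolution μ L u gain loss)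
    (hs : 0 ≤ s) (hS : ∀ r ∈ Icc s t, ∫ x, |u r x| ∂μ ≤ S) :
    Integrable (uncurry gain) ((volume.restrict (Ioc s t)).prod μ) :=
  integrable_uncurry_of_integral_norm_le h.measurable_gain.aestronglyMeasurable
    (ae_restrict_of_forall_mem measurableSet_Ioc fun r hr =>
      h.integrable_gain r (hs.trans_lt hr.1))
    (ae_restrict_of_forall_mem measurableSet_Ioc fun r hr =>
      (h.integral_abs_gain_le r (hs.trans_lt hr.1)).trans
        (h.integral_abs_loss_le_of_forall_le hs hS r hr))

theorem integral_abs_le_of_forall_le (h : IsGainLossEvolution μ L u gain loss)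
    (hs : 0 ≤ s) (hst : s ≤ t) (hS : ∀ r ∈ Icc s t, ∫ x, |u r x| ∂μ ≤ S) :
    ∫ x, |u t x| ∂μ ≤ ∫ x, |u s x| ∂μ := by
  rw [← sub_nonpos]
  calc ∫ x, |u t x| ∂μ - ∫ x, |u s x| ∂μ
      ≤ ∫ r in Ioc s t, ∫ x, (|gain r x| - |loss r x|) ∂μ :=
        integral_sub_integral_le_of_hasDerivWithinAt_Ioi hst
          (fun x => ((h.continuousOn x).mono (Icc_subset_Ici_iff hst |>.2 hs)).abs)
          (h.integrable s hs).abs (h.integrable t (hs.trans hst)).abs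
          ((h.integrable_uncurry_gain hs hS).abs.sub (h.integrable_uncurry_loss hs hS).abs)
          fun r hr x => by
            have hr0 : 0 < r := hs.trans_lt hr.1
            refine exists_le_hasDerivWithinAt_abs_Ioi (h.hasDerivAt r hr0 x).hasDerivWithinAt
              (h.loss_mul_nonneg r hr0 x) fun hu0 => ?_
            simpa [hu0] using h.abs_loss_le r hr0 x
    _ ≤ 0 := setIntegral_nonpos measurableSet_Ioc fun r hr => by
        have hr0 : 0 < r := hs.trans_lt hr.1
        rw [integral_sub (h.integrable_gain r hr0).abs (h.integrable_loss hr0).abs, sub_nonpos]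
        exact h.integral_abs_gain_le r hr0

theorem integral_abs_le_add_of_forall_le (h : IsGainLossEvolution μ L u gain loss)
    (hs : 0 ≤ s) (hst : s ≤ t) (hS : ∀ r ∈ Icc s t, ∫ x, |u r x| ∂μ ≤ S) :
    ∫ x, |u s x| ∂μ ≤ ∫ x, |u t x| ∂μ + 2 * (L * S) * (t - s) := by
  have hf := (h.integrable_uncurry_gain hs hS).abs.add (h.integrable_uncurry_loss hs hS).abs
  have hdecay := integral_sub_integral_le_of_hasDerivWithinAt_Ioi (u := fun r x => -|u r x|)
    (f := fun r x => |gain r x| + |loss r x|) hst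
    (fun x => ((h.continuousOn x).mono (Icc_subset_Ici_iff hst |>.2 hs)).abs.neg)
    (h.integrable s hs).abs.neg (h.integrable t (hs.trans hst)).abs.neg hf fun r hr x => by
      obtain ⟨w, hw, hderiv⟩ := exists_hasDerivWithinAt_abs_Ioi
        (h.hasDerivAt r (hs.trans_lt hr.1) x).hasDerivWithinAt
      exact ⟨-w, (neg_le_abs w).trans (hw.trans_le (abs_sub _ _)), hderiv.neg⟩
  have hrate : ∫ r in Ioc s t, ∫ x, (|gain r x| + |loss r x|) ∂μ ≤ 2 * (L * S) * (t - s) := by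
    calc ∫ r in Ioc s t, ∫ x, (|gain r x| + |loss r x|) ∂μ
        ≤ ∫ _ in Ioc s t, 2 * (L * S) := by
          refine setIntegral_mono_on hf.integral_prod_left (integrable_const _)
            measurableSet_Ioc fun r hr => ?_
          have hr0 : 0 < r := hs.trans_lt hr.1
          have := h.integral_abs_gain_le r hr0
          have := h.integral_abs_loss_le_of_forall_le hs hS r hr
          rw [integral_add (h.integrable_gain r hr0).abs (h.integrable_loss hr0).abs]
          linarith
      _ = 2 * (L * S) * (t - s) := by simp [hst, mul_comm]
  simp only [integral_neg] at hdecay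
  linarith

theorem integral_abs_le_two_mul_of_forall_le (h : IsGainLossEvolution μ L u gain loss)
    (hs : 0 ≤ s) (hst : s ≤ t) (hδ : t - s ≤ (4 * (L + 1))⁻¹)
    (hS : ∀ r ∈ Icc s t, ∫ x, |u r x| ∂μ ≤ S) :
    ∫ x, |u s x| ∂μ ≤ 2 * ∫ x, |u t x| ∂μ := by
  have hL := h.rate_nonneg
  have hle : ∀ r ∈ Icc s t, ∫ x, |u r x| ∂μ ≤ ∫ x, |u s x| ∂μ := fun r hr =>
    h.integral_abs_le_of_forall_le hs hr.1 fun r' hr' => hS r' ⟨hr'.1, hr'.2.trans hr.2⟩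
  have hmass : 0 ≤ ∫ x, |u s x| ∂μ := integral_nonneg fun _ => abs_nonneg _
  have hsmall : L * (t - s) ≤ 1 / 4 := by
    calc L * (t - s) ≤ (L + 1) * (4 * (L + 1))⁻¹ := by gcongr; linarith
      _ = 1 / 4 := by field_simp
  nlinarith [h.integral_abs_le_add_of_forall_le hs hst hle]

theorem integral_abs_le_two_mul_of_bddAbove (h : IsGainLossEvolution μ L u gain loss)
    (hs : 0 ≤ s) (ht : 0 ≤ t) (hst : dist s t ≤ (4 * (L + 1))⁻¹)
    (hb : BddAbove ((fun r => ∫ x, |u r x| ∂μ) '' uIcc s t)) :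
    ∫ x, |u t x| ∂μ ≤ 2 * ∫ x, |u s x| ∂μ := by
  obtain ⟨S, hS⟩ := hb
  rw [mem_upperBounds, forall_mem_image] at hS
  rcases le_total s t with hle | hle
  · rw [uIcc_of_le hle] at hS
    have hmass : 0 ≤ ∫ x, |u s x| ∂μ := integral_nonneg fun _ => abs_nonneg _
    linarith [h.integral_abs_le_of_forall_le hs hle fun r => @hS r]
  · rw [uIcc_of_ge hle] at hS
    rw [Real.dist_eq, abs_of_nonneg (sub_nonneg.2 hle)] at hst
    exact h.integral_abs_le_two_mul_of_forall_le ht hle hst fun r => @hS r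

theorem isBoundedUnder_integral_abs_max_zero (h : IsGainLossEvolution μ L u gain loss) (t : ℝ) :
    IsBoundedUnder (· ≤ ·) (𝓝 t) fun r => ∫ x, |u (max r 0) x| ∂μ := by
  have hmax : Continuous fun r : ℝ => max r 0 := by fun_prop
  have hlsc : LowerSemicontinuous fun r => ∫ x, |u (max r 0) x| ∂μ :=
    lowerSemicontinuous_integral_norm
      (fun x => (h.continuousOn x).comp_continuous hmax fun r => le_max_right r 0)
      fun r => h.integrable _ (le_max_right r 0)
  have hL := h.rate_nonneg
  refine isBoundedUnder_nhds_of_lowerSemicontinuous hlsc (δ := (4 * (L + 1))⁻¹) (by positivity)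
    zero_le_two (fun s t hst hb => ?_) t
  refine h.integral_abs_le_two_mul_of_bddAbove (le_max_right s 0) (le_max_right t 0) ?_ ?_
  · exact (abs_max_sub_max_le_abs s t 0).trans hst
  · rw [segment_eq_uIcc, ← image_image (fun r => ∫ x, |u r x| ∂μ)] at hb
    exact hb.mono (image_mono (intermediate_value_uIcc hmax.continuousOn))

theorem antitoneOn_integral_abs (h : IsGainLossEvolution μ L u gain loss) :
    AntitoneOn (fun t => ∫ x, |u t x| ∂μ) (Ici 0) := by
  intro s hs t _ hst
  obtain ⟨S, hS⟩ := bddAbove_image_of_isBoundedUnder_nhds (K := Icc s t) isCompact_Icc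
    fun r _ => h.isBoundedUnder_integral_abs_max_zero r
  refine h.integral_abs_le_of_forall_le (S := S) hs hst fun r hr => ?_
  simpa only [max_eq_left (le_trans hs hr.1)] using hS (mem_image_of_mem _ hr)

end IsGainLossEvolution

section Convolution

variable {𝕜 G E E' F : Type*} [RCLike 𝕜] [AddGroup G] [MeasurableSpace G] {μ : Measure G}
  [NormedAddCommGroup E] [NormedSpace 𝕜 E] [NormedAddCommGroup E'] [NormedSpace 𝕜 E']
  [NormedAddCommGroup F] [NormedSpace 𝕜 F] {f : G → E} {g : G → E'}

theorem convolutionExists_of_isBounded_range [MeasurableAdd G] [MeasurableNeg G]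
    (L : E →L[𝕜] E' →L[𝕜] F) (hf : Integrable f μ) (hg : StronglyMeasurable g)
    (hbdd : Bornology.IsBounded (range g)) : ConvolutionExists f g L μ := by
  obtain ⟨C, hC⟩ := isBounded_iff_forall_norm_le.1 hbdd
  rw [forall_mem_range] at hC
  refine fun x => (hf.norm.const_mul (‖L‖ * C)).mono' ?_ (.of_forall fun t => ?_)
  · exact L.aestronglyMeasurable_comp₂ hf.aestronglyMeasurable
      (hg.comp_measurable (measurable_id.const_sub x)).aestronglyMeasurable
  · calc ‖L (f t) (g (x - t))‖ ≤ ‖L‖ * ‖f t‖ * ‖g (x - t)‖ := L.le_opNorm₂ _ _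
      _ ≤ ‖L‖ * ‖f t‖ * C := by gcongr; exact hC _
      _ = ‖L‖ * C * ‖f t‖ := mul_right_comm _ _ _

variable [NormedSpace ℝ F]

theorem fwdDiff_convolution {G : Type*} [AddCommGroup G] [MeasurableSpace G] {μ : Measure G}
    {f : G → E} {g : G → E'} (L : E →L[𝕜] E' →L[𝕜] F) (hfg : ConvolutionExists f g L μ) (h : G) :
    fwdDiff h (f ⋆[L, μ] g) = f ⋆[L, μ] fwdDiff h g := by
  ext x
  have hshift : ∀ t, x + h - t = x - t + h := fun t => add_sub_right_comm x h t
  simp only [fwdDiff, convolution_def, map_sub]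
  rw [← integral_sub (hfg (x + h)).integrable (hfg x).integrable]
  simp only [hshift]

variable [MeasurableAdd₂ G] [MeasurableNeg G] [SFinite μ]

theorem stronglyMeasurable_uncurry_convolution {T : Type*} [MeasurableSpace T] {g : T → G → E'}
    (L : E →L[𝕜] E' →L[𝕜] F) (hf : StronglyMeasurable f) (hg : StronglyMeasurable (uncurry g)) :
    StronglyMeasurable (uncurry fun t => f ⋆[L, μ] g t) := by
  have hintegrand : StronglyMeasurable fun p : (T × G) × G => L (f p.2) (g p.1.1 (p.1.2 - p.2)) :=
    L.continuous₂.comp_stronglyMeasurable <| (hf.comp_measurable measurable_snd).prodMk <|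
      hg.comp_measurable (measurable_fst.fst.prodMk (measurable_fst.snd.sub measurable_snd))
  exact hintegrand.integral_prod_right'

variable [μ.IsAddRightInvariant]

theorem integral_norm_convolution_le (L : E →L[𝕜] E' →L[𝕜] F)
    (hf : Integrable f μ) (hg : Integrable g μ) :
    ∫ x, ‖(f ⋆[L, μ] g) x‖ ∂μ ≤ ‖L‖ * (∫ x, ‖f x‖ ∂μ) * ∫ x, ‖g x‖ ∂μ := by
  let mulR := ContinuousLinearMap.mul ℝ ℝ
  calc ∫ x, ‖(f ⋆[L, μ] g) x‖ ∂μ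
      ≤ ∫ x, ‖L‖ * ((fun y => ‖f y‖) ⋆[mulR, μ] fun y => ‖g y‖) x ∂μ := by
        refine integral_mono_ae (hf.integrable_convolution L hg).norm
          ((hf.norm.integrable_convolution mulR hg.norm).const_mul _) ?_
        filter_upwards [hf.norm.ae_convolution_exists mulR hg.norm] with x hx
        rw [convolution_def, convolution_def, ← integral_const_mul]
        exact norm_integral_le_of_norm_le (hx.integrable.const_mul _) <| .of_forall fun t =>
          (L.le_opNorm₂ _ _).trans_eq (mul_assoc _ _ _)
    _ = ‖L‖ * (∫ x, ‖f x‖ ∂μ) * ∫ x, ‖g x‖ ∂μ := by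
        rw [integral_const_mul, integral_convolution mulR hf.norm hg.norm, mul_assoc]
        rfl

end Convolution

section ForwardDifference

variable {G : Type*} [AddCommMonoid G] [MeasurableSpace G] [MeasurableAdd G]

theorem measurable_uncurry_fwdDiff {T : Type*} [MeasurableSpace T] {f : T → G → ℝ}
    (hf : Measurable (uncurry f)) (h : G) : Measurable (uncurry fun t => fwdDiff h (f t)) :=
  (hf.comp (measurable_fst.prodMk (measurable_snd.add_const h))).sub hf

theorem integrable_fwdDiff_comp_of_lipschitzWith {μ : Measure G} {f : G → ℝ} (hf : Measurable f)
    {K : NNReal} {φ : ℝ → ℝ} (hφ : LipschitzWith K φ) {h : G}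
    (hint : Integrable (fwdDiff h f) μ) : Integrable (fwdDiff h (φ ∘ f)) μ := by
  have hφf : Measurable (φ ∘ f) := hφ.continuous.measurable.comp hf
  exact (hint.norm.const_mul K).mono' ((hφf.comp (measurable_add_const h)).sub hφf
    |>.aestronglyMeasurable) (.of_forall fun x => hφ.norm_sub_le (f (x + h)) (f x))

end ForwardDifference

section WeightedSums

variable {ι : Type*} {s : Finset ι} {a : ι → ℝ} {φ : ι → ℝ → ℝ}

theorem abs_sum_mul_sub_of_monotone (ha : ∀ i ∈ s, 0 ≤ a i) (hφ : ∀ i ∈ s, Monotone (φ i))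
    (x y : ℝ) : |∑ i ∈ s, a i * (φ i y - φ i x)| = ∑ i ∈ s, a i * |φ i y - φ i x| := by
  wlog hxy : x ≤ y generalizing x y
  · have hswap := this y x (le_of_not_ge hxy)
    rw [← abs_neg, ← Finset.sum_neg_distrib]
    simpa only [← mul_neg, neg_sub, abs_sub_comm] using hswap
  have hnonneg : ∀ i ∈ s, 0 ≤ φ i y - φ i x := fun i hi => sub_nonneg.2 (hφ i hi hxy)
  rw [Finset.abs_sum_of_nonneg fun i hi => mul_nonneg (ha i hi) (hnonneg i hi)]
  exact Finset.sum_congr rfl fun i hi => by rw [abs_of_nonneg (hnonneg i hi)]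

theorem sum_mul_sub_mul_sub_nonneg_of_monotone (ha : ∀ i ∈ s, 0 ≤ a i)
    (hφ : ∀ i ∈ s, Monotone (φ i)) (x y : ℝ) :
    0 ≤ (∑ i ∈ s, a i * (φ i y - φ i x)) * (y - x) := by
  rw [Finset.sum_mul]
  refine Finset.sum_nonneg fun i hi => ?_
  rw [mul_assoc]
  exact mul_nonneg (ha i hi)
    (monovary_iff_forall_mul_nonneg.1 ((hφ i hi).monovary monotone_id) x y)

theorem abs_sum_mul_sub_le_of_lipschitzWith_one (ha : ∀ i ∈ s, 0 ≤ a i)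
    (hφ : ∀ i ∈ s, LipschitzWith 1 (φ i)) (x y : ℝ) :
    |∑ i ∈ s, a i * (φ i y - φ i x)| ≤ (∑ i ∈ s, a i) * |y - x| := by
  rw [Finset.sum_mul]
  refine (Finset.abs_sum_le_sum_abs _ _).trans (Finset.sum_le_sum fun i hi => ?_)
  rw [abs_mul, abs_of_nonneg (ha i hi)]
  exact mul_le_mul_of_nonneg_left (by simpa using (hφ i hi).norm_sub_le y x) (ha i hi)

theorem integral_abs_sum_mul_le {X : Type*} [MeasurableSpace X] {μ : Measure X} {p q : ι → X → ℝ}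
    (ha : ∀ i ∈ s, 0 ≤ a i) (hp : ∀ i ∈ s, Integrable (p i) μ) (hq : ∀ i ∈ s, Integrable (q i) μ)
    (hqp : ∀ i ∈ s, ∫ x, |q i x| ∂μ ≤ ∫ x, |p i x| ∂μ) :
    ∫ x, |∑ i ∈ s, a i * q i x| ∂μ ≤ ∫ x, ∑ i ∈ s, a i * |p i x| ∂μ := by
  calc ∫ x, |∑ i ∈ s, a i * q i x| ∂μ ≤ ∫ x, ∑ i ∈ s, a i * |q i x| ∂μ := by
        refine integral_mono (integrable_finsetSum s fun i hi => (hq i hi).const_mul (a i)).abs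
          (integrable_finsetSum s fun i hi => (hq i hi).abs.const_mul (a i)) fun x => ?_
        refine (Finset.abs_sum_le_sum_abs _ _).trans_eq (Finset.sum_congr rfl fun i hi => ?_)
        rw [abs_mul, abs_of_nonneg (ha i hi)]
    _ = ∑ i ∈ s, a i * ∫ x, |q i x| ∂μ := by
        rw [integral_finsetSum s fun i hi => (hq i hi).abs.const_mul (a i)]
        simp only [integral_const_mul]
    _ ≤ ∑ i ∈ s, a i * ∫ x, |p i x| ∂μ :=
        Finset.sum_le_sum fun i hi => mul_le_mul_of_nonneg_left (hqp i hi) (ha i hi)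
    _ = ∫ x, ∑ i ∈ s, a i * |p i x| ∂μ := by
        rw [integral_finsetSum s fun i hi => (hp i hi).abs.const_mul (a i)]
        simp only [integral_const_mul]

end WeightedSums

/-- The family `γ` is a classical solution on `[0, ∞)`, bounded at each positive time, of the
nonlocal equation `∂ₜγ = ∑ i, a i * (k i ⋆ φ i(γ) - φ i(γ))`. The index `i` ranges over the
diffusing phases, and `φ i` extracts the part of `γ` in phase `i`. -/
structure IsNonlocalDiffusion {ι G : Type*} [Fintype ι] [AddCommGroup G] [MeasurableSpace G]
    (μ : Measure G) (a : ι → ℝ) (k : ι → G → ℝ) (φ : ι → ℝ → ℝ) (γ : ℝ → G → ℝ) : Prop where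
  continuousOn : ∀ x, ContinuousOn (γ · x) (Ici 0)
  measurable : Measurable (uncurry γ)
  isBounded_range : ∀ t > 0, Bornology.IsBounded (range (γ t))
  hasDerivAt : ∀ t > 0, ∀ x, HasDerivAt (γ · x)
    (∑ i, a i * ((k i ⋆[ContinuousLinearMap.mul ℝ ℝ, μ] (φ i ∘ γ t)) x - φ i (γ t x))) t

namespace IsNonlocalDiffusion

variable {ι G : Type*} [Fintype ι] [AddCommGroup G] [MeasurableSpace G] {μ : Measure G}
  {a : ι → ℝ} {k : ι → G → ℝ} {φ : ι → ℝ → ℝ} {γ : ℝ → G → ℝ} {t : ℝ}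

theorem measurable_apply (hγ : IsNonlocalDiffusion μ a k φ γ) (t : ℝ) : Measurable (γ t) :=
  hγ.measurable.comp measurable_prodMk_left

theorem measurable_uncurry_fwdDiff_comp [MeasurableAdd G] (hγ : IsNonlocalDiffusion μ a k φ γ)
    (hφ : ∀ i, Continuous (φ i)) (h : G) (i : ι) :
    Measurable (uncurry fun t => fwdDiff h (φ i ∘ γ t)) :=
  measurable_uncurry_fwdDiff (f := fun t => φ i ∘ γ t) ((hφ i).measurable.comp hγ.measurable) h

theorem convolutionExists_comp [MeasurableAdd G] [MeasurableNeg G]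
    (hγ : IsNonlocalDiffusion μ a k φ γ) (hk : ∀ i, Integrable (k i) μ)
    (hφ : ∀ i, LipschitzWith 1 (φ i)) (ht : 0 < t) (i : ι) :
    ConvolutionExists (k i) (φ i ∘ γ t) (ContinuousLinearMap.mul ℝ ℝ) μ := by
  refine convolutionExists_of_isBounded_range _ (hk i)
    ((hφ i).continuous.measurable.comp (hγ.measurable_apply t)).stronglyMeasurable ?_
  rw [range_comp]
  exact (hφ i).isBounded_image (hγ.isBounded_range t ht)

theorem hasDerivAt_fwdDiff [MeasurableAdd G] [MeasurableNeg G] (hγ : IsNonlocalDiffusion μ a k φ γ)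
    (hk : ∀ i, Integrable (k i) μ) (hφ : ∀ i, LipschitzWith 1 (φ i)) (h : G) (ht : 0 < t) (x : G) :
    HasDerivAt (fun s => fwdDiff h (γ s) x)
      ((∑ i, a i * (k i ⋆[ContinuousLinearMap.mul ℝ ℝ, μ] fwdDiff h (φ i ∘ γ t)) x)
        - ∑ i, a i * fwdDiff h (φ i ∘ γ t) x) t := by
  refine ((hγ.hasDerivAt t ht (x + h)).sub (hγ.hasDerivAt t ht x)).congr_deriv ?_
  simp only [← fwdDiff_convolution _ (hγ.convolutionExists_comp hk hφ ht _)]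
  simp only [← Finset.sum_sub_distrib, fwdDiff, comp_apply]
  exact Finset.sum_congr rfl fun i _ => by ring

variable [MeasurableAdd₂ G] [MeasurableNeg G] [SFinite μ] [μ.IsAddRightInvariant]

theorem integral_abs_sum_convolution_fwdDiff_le (hγ : IsNonlocalDiffusion μ a k φ γ)
    (ha : ∀ i, 0 ≤ a i) (hk : ∀ i, Integrable (k i) μ) (hk_le : ∀ i, ∫ x, |k i x| ∂μ ≤ 1)
    (hφ_mono : ∀ i, Monotone (φ i)) (hφ : ∀ i, LipschitzWith 1 (φ i)) {h : G}
    (hint : Integrable (fwdDiff h (γ t)) μ) :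
    ∫ x, |∑ i, a i * (k i ⋆[ContinuousLinearMap.mul ℝ ℝ, μ] fwdDiff h (φ i ∘ γ t)) x| ∂μ
      ≤ ∫ x, |∑ i, a i * fwdDiff h (φ i ∘ γ t) x| ∂μ := by
  have hp : ∀ i, Integrable (fwdDiff h (φ i ∘ γ t)) μ := fun i =>
    integrable_fwdDiff_comp_of_lipschitzWith (hγ.measurable_apply t) (hφ i) hint
  refine (integral_abs_sum_mul_le (fun i _ => ha i) (fun i _ => hp i)
    (fun i _ => (hk i).integrable_convolution _ (hp i)) fun i _ => ?_).trans_eq <|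
    integral_congr_ae <| .of_forall fun x =>
      (abs_sum_mul_sub_of_monotone (fun i _ => ha i) (fun i _ => hφ_mono i) _ _).symm
  have hyoung := integral_norm_convolution_le (ContinuousLinearMap.mul ℝ ℝ) (hk i) (hp i)
  rw [ContinuousLinearMap.opNorm_mul, one_mul] at hyoung
  exact hyoung.trans (mul_le_of_le_one_left (integral_nonneg fun _ => norm_nonneg _) (hk_le i))

theorem isGainLossEvolution_fwdDiff (hγ : IsNonlocalDiffusion μ a k φ γ)
    (ha : ∀ i, 0 ≤ a i) (hk_meas : ∀ i, Measurable (k i)) (hk : ∀ i, Integrable (k i) μ)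
    (hk_le : ∀ i, ∫ x, |k i x| ∂μ ≤ 1) (hφ_mono : ∀ i, Monotone (φ i))
    (hφ : ∀ i, LipschitzWith 1 (φ i)) {h : G}
    (hint : ∀ t ≥ 0, Integrable (fwdDiff h (γ t)) μ) :
    IsGainLossEvolution μ (∑ i, a i) (fun t => fwdDiff h (γ t))
      (fun t x => ∑ i, a i * (k i ⋆[ContinuousLinearMap.mul ℝ ℝ, μ] fwdDiff h (φ i ∘ γ t)) x)
      (fun t x => ∑ i, a i * fwdDiff h (φ i ∘ γ t) x) where
  rate_nonneg := Finset.sum_nonneg fun i _ => ha i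
  continuousOn x := (hγ.continuousOn (x + h)).sub (hγ.continuousOn x)
  integrable := hint
  hasDerivAt _ ht := hγ.hasDerivAt_fwdDiff hk hφ h ht
  measurable_loss := Finset.measurable_fun_sum _ fun i _ =>
    (hγ.measurable_uncurry_fwdDiff_comp (fun i => (hφ i).continuous) h i).const_mul (a i)
  loss_mul_nonneg _ _ _ :=
    sum_mul_sub_mul_sub_nonneg_of_monotone (fun i _ => ha i) (fun i _ => hφ_mono i) _ _
  abs_loss_le _ _ _ :=
    abs_sum_mul_sub_le_of_lipschitzWith_one (fun i _ => ha i) (fun i _ => hφ i) _ _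
  measurable_gain := Finset.measurable_fun_sum _ fun i _ =>
    (stronglyMeasurable_uncurry_convolution _ (hk_meas i).stronglyMeasurable
      (hγ.measurable_uncurry_fwdDiff_comp (fun i => (hφ i).continuous) h i).stronglyMeasurable
      |>.measurable).const_mul (a i)
  integrable_gain t ht := integrable_finsetSum _ fun i _ =>
    ((hk i).integrable_convolution _
      (integrable_fwdDiff_comp_of_lipschitzWith (hγ.measurable_apply t) (hφ i)
        (hint t (le_of_lt ht)))).const_mul (a i)
  integral_abs_gain_le t ht :=
    hγ.integral_abs_sum_convolution_fwdDiff_le ha hk hk_le hφ_mono hφ (hint t (le_of_lt ht))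

end IsNonlocalDiffusion

namespace IsTwoPhaseStefanSol

variable {n : ℕ} {a b ℓ₀ : ℝ} {k η : EuclideanSpace ℝ (Fin n) → ℝ}
  {γ : ℝ → EuclideanSpace ℝ (Fin n) → ℝ}

-- Freezing `γ` at negative times makes it measurable in time and space together.
theorem isNonlocalDiffusion_max_zero (hγ : IsTwoPhaseStefanSol a b ℓ₀ k η γ) :
    IsNonlocalDiffusion volume ![a, b] ![k, η] ![fun r => max r 0, fun r => min (r + ℓ₀) 0]
      fun t => γ (max t 0) where
  continuousOn x := (hγ.1 x).comp (by fun_prop) fun t _ => le_max_right t 0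
  measurable := measurable_uncurry_of_continuous_of_measurable
    (fun x => (hγ.1 x).comp_continuous (by fun_prop) fun t => le_max_right t 0) fun t => hγ.2.1 _
  isBounded_range t _ := by
    obtain ⟨C, hC⟩ := hγ.2.2.1 (max t 0) (le_max_right t 0)
    exact isBounded_iff_forall_norm_le.2 ⟨C, forall_mem_range.2 hC⟩
  hasDerivAt t ht x := by
    have hmax : (fun s => γ (max s 0) x) =ᶠ[𝓝 t] (γ · x) := by
      filter_upwards [Ioi_mem_nhds ht] with s hs
      rw [max_eq_left (le_of_lt hs)]
    refine ((hγ.2.2.2 t ht x).congr_of_eventuallyEq hmax).congr_deriv ?_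
    simp [Fin.sum_univ_two, convolution_mul_swap, max_eq_left (le_of_lt ht)]

end IsTwoPhaseStefanSol

theorem stmt_9_general {n : ℕ} {a b ℓ₀ : ℝ} (ha : 0 ≤ a) (hb : 0 ≤ b)
    {k η : EuclideanSpace ℝ (Fin n) → ℝ} (hk_meas : Measurable k) (hη_meas : Measurable η)
    (hk : Integrable k) (hη : Integrable η) (hk_le : ∫ x, |k x| ≤ 1) (hη_le : ∫ x, |η x| ≤ 1)
    {γ : ℝ → EuclideanSpace ℝ (Fin n) → ℝ} (hγ : IsTwoPhaseStefanSol a b ℓ₀ k η γ)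
    {h : EuclideanSpace ℝ (Fin n)} (hint : ∀ t ≥ 0, Integrable fun x => γ t (x + h) - γ t x) :
    AntitoneOn (fun t => ∫ x, |γ t (x + h) - γ t x|) (Ici 0) := by
  have hevol := hγ.isNonlocalDiffusion_max_zero.isGainLossEvolution_fwdDiff (h := h)
    (by simp [Fin.forall_fin_two, ha, hb]) (by simp [Fin.forall_fin_two, hk_meas, hη_meas])
    (by simp [Fin.forall_fin_two, hk, hη]) (by simp [Fin.forall_fin_two, hk_le, hη_le])
    (Fin.forall_fin_two.2 ⟨fun _ _ hrs => max_le_max_right _ hrs,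
      fun _ _ hrs => min_le_min_right _ (add_le_add_left hrs ℓ₀)⟩)
    (Fin.forall_fin_two.2 ⟨LipschitzWith.id.max_const 0,
      (isometry_add_right ℓ₀).lipschitz.min_const 0⟩)
    fun t _ => hint _ (le_max_right t 0)
  refine hevol.antitoneOn_integral_abs.congr fun t ht => ?_
  simp only [max_eq_left (mem_Ici.1 ht), fwdDiff]

/-- `L¹` contraction of spatial translates for the nonlocal two-phase Stefan
problem (Lemma 2.3). -/
theorem stmt_9 (n : ℕ) (hn : 0 < n) (a b ℓ₀ α₀ : ℝ)
    (ha : 0 < a) (hb : 0 < b) (hℓ₀ : 0 < ℓ₀) (hα₀ : 0 < α₀) (hα₀ℓ₀ : α₀ < ℓ₀)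
    (k η : EuclideanSpace ℝ (Fin n) → ℝ)
    (hk_cont : Continuous k) (hη_cont : Continuous η)
    (hk_nonneg : ∀ x, 0 ≤ k x) (hη_nonneg : ∀ x, 0 ≤ η x)
    (hk_bdd : ∃ C : ℝ, ∀ x, |k x| ≤ C) (hη_bdd : ∃ C : ℝ, ∀ x, |η x| ≤ C)
    (hk_int : ∫ x, k x = 1) (hη_int : ∫ x, η x = 1)
    (Ω₀ : Set (EuclideanSpace ℝ (Fin n)))
    (hΩ₀_open : IsOpen Ω₀) (hΩ₀_bdd : Bornology.IsBounded Ω₀)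
    (γ₀ : EuclideanSpace ℝ (Fin n) → ℝ)
    (hγ₀_meas : Measurable γ₀) (hγ₀_bdd : ∃ C : ℝ, ∀ x, |γ₀ x| ≤ C)
    (hγ₀_out : ∀ x ∉ closure Ω₀, γ₀ x = -α₀)
    (γ : ℝ → EuclideanSpace ℝ (Fin n) → ℝ)
    (hγ : IsTwoPhaseStefanSol a b ℓ₀ k η γ)
    (hγ0 : ∀ x, γ 0 x = γ₀ x)
    (hint : ∀ t ≥ (0:ℝ), ∀ h : EuclideanSpace ℝ (Fin n),
      Integrable (fun x => γ t (x + h) - γ t x)) :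
    ∀ t > (0:ℝ), ∀ h : EuclideanSpace ℝ (Fin n),
      ∫ x, |γ t (x + h) - γ t x| ≤ ∫ x, |γ₀ (x + h) - γ₀ x| := by
  intro t ht h
  simpa only [hγ0] using stmt_9_general ha.le hb.le hk_cont.measurable hη_cont.measurable
    (.of_integral_ne_zero (by simp [hk_int])) (.of_integral_ne_zero (by simp [hη_int]))
    (by simp [abs_of_nonneg, hk_nonneg, hk_int]) (by simp [abs_of_nonneg, hη_nonneg, hη_int])
    hγ (hint · · h) self_mem_Ici ht.le ht.le
end
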